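/- arXiv:1506.02572 — 2 statements merged into one kernel-verified Lean document; each statement's English description precedes it below -/
import Mathlib

section
/- Let ω = π/2 and let O be a convex polygon with at least 5 vertices, all of whose interior angles are strictly greater than π/2 (no narrow vertices). Let (q, d₁) be a valid π/2-probe of O with closest contact points v₁ on its arm H₁ and v₂ on its arm H₂. Let (q', d₁') be a valid π/2-probe of O along the directed line through v₁ and v₂ directed from v₁ to v₂, with closest contact points v₃ on its arm H₁' and v₄ on its arm H₂', and suppose v₃ ∉ {v₁, v₂} and v₄ ∉ {v₁, v₂}. Then the segment joining v₃ and v₂ is not an edge of O. -/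
open Real EuclideanGeometry

noncomputable section

abbrev Plane := EuclideanSpace ℝ (Fin 2)

/-- Counterclockwise rotation of a vector of the plane by angle `θ`. -/
def rot (θ : ℝ) (d : Plane) : Plane :=
  (WithLp.equiv 2 (Fin 2 → ℝ)).symm
    ![Real.cos θ * d 0 - Real.sin θ * d 1, Real.sin θ * d 0 + Real.cos θ * d 1]

/-- A convex polygon: the convex hull of at least 3 points in strictly convex position;
the points are the vertices. -/
structure ConvexPolygon where
  verts : Finset Plane
  three_le_card : 3 ≤ verts.card
  strictConvexPos : ∀ v ∈ verts, v ∉ convexHull ℝ ((verts : Set Plane) \ {v})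

/-- The polygon as a subset of the plane. -/
def ConvexPolygon.body (O : ConvexPolygon) : Set Plane :=
  convexHull ℝ (O.verts : Set Plane)

/-- `x` and `y` are adjacent vertices of `O` (the segment joining them is an edge of `O`). -/
def ConvexPolygon.Adj (O : ConvexPolygon) (x y : Plane) : Prop :=
  x ∈ O.verts ∧ y ∈ O.verts ∧ x ≠ y ∧ segment ℝ x y ⊆ frontier O.body

/-- The interior angle of `O` at a vertex `v`: the angle `∠ u v w` where `u` and `w` are
the two vertices adjacent to `v`. -/
def ConvexPolygon.intAngle (O : ConvexPolygon) (v : Plane) : ℝ :=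
  sSup {θ | ∃ u w, O.Adj v u ∧ O.Adj v w ∧ u ≠ w ∧ θ = ∠ u v w}

/-- A narrow vertex: a vertex whose interior angle is at most `ω`. -/
def ConvexPolygon.IsNarrow (O : ConvexPolygon) (ω : ℝ) (v : Plane) : Prop :=
  v ∈ O.verts ∧ O.intAngle v ≤ ω

/-- `O` is a rectangle: exactly 4 vertices, all interior angles `π/2`. -/
def ConvexPolygon.IsRectangle (O : ConvexPolygon) : Prop :=
  O.verts.card = 4 ∧ ∀ v ∈ O.verts, O.intAngle v = Real.pi / 2

/-- The `ω`-wedge with apex `q` and first arm direction `d`. -/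
def wedge (ω : ℝ) (q d : Plane) : Set Plane :=
  {x | ∃ s t : ℝ, 0 ≤ s ∧ 0 ≤ t ∧ x = q + s • d + t • rot ω d}

/-- The first arm of a wedge: the ray from `q` in direction `d`. -/
def arm1 (q d : Plane) : Set Plane := {x | ∃ t : ℝ, 0 ≤ t ∧ x = q + t • d}

/-- The second arm of an `ω`-wedge: the ray from `q` in direction `rot ω d`. -/
def arm2 (ω : ℝ) (q d : Plane) : Set Plane := arm1 q (rot ω d)

/-- `(q, d)` is a valid `ω`-probe of `O`: a wedge with unit arm direction containing `O`,
each of whose arms meets `O`. -/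
def IsValidProbe (ω : ℝ) (O : ConvexPolygon) (q d : Plane) : Prop :=
  ‖d‖ = 1 ∧ O.body ⊆ wedge ω q d ∧
    (arm1 q d ∩ O.body).Nonempty ∧ (arm2 ω q d ∩ O.body).Nonempty

/-- A directed line: a point together with a unit direction. -/
structure DirLine where
  pt : Plane
  dir : Plane
  norm_dir : ‖dir‖ = 1

/-- Membership of a point in a directed line. -/
def DirLine.mem (L : DirLine) (x : Plane) : Prop := ∃ t : ℝ, x = L.pt + t • L.dir

/-- A valid `ω`-probe of `O` along the directed line `L`. -/
def IsValidProbeAlong (ω : ℝ) (O : ConvexPolygon) (L : DirLine) (q d : Plane) : Prop :=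
  IsValidProbe ω O q d ∧ L.mem q ∧ ∃ t : ℝ, 0 ≤ t ∧ q + t • L.dir ∈ O.body

/-- `p` is the point of `A` closest to `q`. -/
def ClosestOn (q : Plane) (A : Set Plane) (p : Plane) : Prop :=
  p ∈ A ∧ ∀ x ∈ A, dist q p ≤ dist q x

/-!
With `ω` the area form, `⟪d, ·⟫` and `ω d ·` are the coordinates along the arms of the first probe.
The chord `v₂ - v₁` has negative first and positive second coordinate. The apex `q'` precedes `v₁`
on the directed line, hence lies below the first arm, and this forces both coordinates of `d'` to be
positive. If `v₃v₂` were an edge, then `O` would lie, seen from `v₃`, in the cone spanned by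
`v₂ - v₃` and `-d'`, and, seen from `v₂`, in the cone spanned by `v₃ - v₂` and minus the direction
of the second arm. Both cones contain an obtuse interior angle, so `v₃ - v₂` makes an obtuse angle
with `d'` and an acute one with the second arm. The latter puts `v₃ - v₂` into the closed first
quadrant together with `d'`, contradicting the former.
-/

section OrientedPlane

open scoped RealInnerProductSpace

variable {E : Type*} [NormedAddCommGroup E] [NormedSpace ℝ E] [FiniteDimensional ℝ E] in
theorem exists_ne_zero_forall_le_of_notMem_interior {S : Set E} (hS : Convex ℝ S) {z : E}
    (hzS : z ∈ S) (hz : z ∉ interior S) :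
    ∃ f : StrongDual ℝ E, f ≠ 0 ∧ ∀ p ∈ S, f p ≤ f z := by
  by_cases hint : (interior S).Nonempty
  · exact geometric_hahn_banach_of_nonempty_interior_point hS hz hint
  · have hspan : (affineSpan ℝ S).direction < ⊤ := by
      rw [lt_top_iff_ne_top, Ne, AffineSubspace.direction_eq_top_iff_of_nonempty
        ⟨z, subset_affineSpan ℝ S hzS⟩, ← hS.interior_nonempty_iff_affineSpan_eq_top]
      exact hint
    obtain ⟨f, hf, hker⟩ := Submodule.exists_le_ker_of_lt_top _ hspan
    refine ⟨f.toContinuousLinearMap, by simpa using hf, fun p hp ↦ ?_⟩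
    have hfp : f (p - z) = 0 := hker <| AffineSubspace.vsub_mem_direction
      (subset_affineSpan ℝ S hp) (subset_affineSpan ℝ S hzS)
    simpa [sub_eq_zero] using hfp.le

variable {E : Type*} [NormedAddCommGroup E] [InnerProductSpace ℝ E]
  [Fact (Module.finrank ℝ E = 2)] (o : Orientation ℝ E (Fin 2))

local notation "ω" => o.areaForm

theorem exists_eq_smul_areaForm {u : E} (hu : u ≠ 0) {f : E →ₗ[ℝ] ℝ} (hfu : f u = 0) :
    ∃ k : ℝ, f = k • ω u := by
  refine ⟨f (o.rightAngleRotation u) / ‖u‖ ^ 2, (o.basisRightAngleRotation u hu).ext fun i ↦ ?_⟩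
  have : ‖u‖ ≠ 0 := norm_ne_zero_iff.2 hu
  fin_cases i <;> simp [hfu, this]

theorem areaForm_nonneg_or_nonpos_of_notMem_interior {S : Set E} (hS : Convex ℝ S) {x y z : E}
    (hx : x ∈ S) (hy : y ∈ S) (hz : z ∈ openSegment ℝ x y) (hzS : z ∉ interior S) :
    (∀ p ∈ S, 0 ≤ ω (y - x) (p - x)) ∨ ∀ p ∈ S, ω (y - x) (p - x) ≤ 0 := by
  have : FiniteDimensional ℝ E := .of_fact_finrank_eq_two
  obtain rfl | hxy := eq_or_ne x y
  · simp
  obtain ⟨f, hf, hmax⟩ :=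
    exists_ne_zero_forall_le_of_notMem_interior hS (hS.openSegment_subset hx hy hz) hzS
  obtain ⟨hfx, hfy⟩ : f x = f z ∧ f y = f z := by
    obtain ⟨a, b, ha, hb, hab, rfl⟩ := hz
    have hx' := hmax x hx
    have hy' := hmax y hy
    simp only [map_add, map_smul, smul_eq_mul] at hx' hy' ⊢
    obtain rfl : a = 1 - b := by linarith
    constructor <;> nlinarith
  obtain ⟨k, hk⟩ := exists_eq_smul_areaForm o (sub_ne_zero.2 hxy.symm) (f := f)
    (by simp [hfx, hfy])
  have hk0 : k ≠ 0 := by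
    rintro rfl
    exact hf (ContinuousLinearMap.coe_injective (by simpa using hk))
  have hmax' : ∀ p ∈ S, k * ω (y - x) (p - x) ≤ 0 := fun p hp ↦ by
    have hkp : f (p - x) = k * ω (y - x) (p - x) := LinearMap.congr_fun hk (p - x)
    rw [← hkp, map_sub, hfx]
    exact sub_nonpos.2 (hmax p hp)
  obtain hneg | hpos := hk0.lt_or_gt
  · exact .inl fun p hp ↦ nonneg_of_mul_nonpos_right (hmax' p hp) hneg
  · exact .inr fun p hp ↦ nonpos_of_mul_nonpos_right (hmax' p hp) hpos

theorem inner_nonneg_of_areaForm_nonneg {x u w : E} (hx : x ≠ 0) (hu : 0 ≤ ⟪x, u⟫)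
    (hw : 0 ≤ ⟪x, w⟫) (hωu : 0 ≤ ω x u) (hωw : 0 ≤ ω x w) : 0 ≤ ⟪u, w⟫ := by
  have h : 0 ≤ ‖x‖ ^ 2 * ⟪u, w⟫ :=
    o.inner_mul_inner_add_areaForm_mul_areaForm x u w ▸ by positivity
  exact nonneg_of_mul_nonneg_right h (by positivity)

theorem inner_neg_of_mem_cone {x u n : E} (hxu : 0 < ω x u) (hxn : 0 ≤ ω x n) (hnu : 0 ≤ ω n u)
    (hn : ⟪x, n⟫ < 0) : ⟪x, u⟫ < 0 := by
  have h := o.inner_mul_areaForm_sub x n u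
  by_contra! hu
  nlinarith [mul_nonneg hxn hu, mul_neg_of_neg_of_pos hn hxu, mul_nonneg (sq_nonneg ‖x‖) hnu]

theorem areaForm_pos_of_inner {d e w : E} (hdw : ⟪d, w⟫ < 0) (hωdw : 0 < ω d w)
    (hde : 0 < ⟪d, e⟫) (hew : 0 ≤ ⟪e, w⟫) : 0 < ω d e ∧ 0 < ω e w := by
  have hd : 0 < ‖d‖ ^ 2 := by
    have : d ≠ 0 := by rintro rfl; simp at hde
    positivity
  have hωde : 0 < ω d e := by
    have h := o.inner_mul_inner_add_areaForm_mul_areaForm d e w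
    by_contra! hneg
    nlinarith [mul_nonneg hd.le hew]
  refine ⟨hωde, pos_of_mul_pos_right ?_ hd.le⟩
  rw [← o.inner_mul_areaForm_sub d e w]
  nlinarith

end OrientedPlane

section Probes

open scoped RealInnerProductSpace EuclideanSpace

/-- The standard orientation of the plane; it makes `rot` the counterclockwise rotation in the
sense of oriented angles. -/
def planeOrientation : Orientation ℝ Plane (Fin 2) :=
  (EuclideanSpace.basisFun (Fin 2) ℝ).toBasis.orientation

local notation "ω" => planeOrientation.areaForm

theorem planeOrientation_areaForm (x y : Plane) : ω x y = x 0 * y 1 - x 1 * y 0 := by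
  rw [Orientation.areaForm_to_volumeForm,
    planeOrientation.volumeForm_robust (EuclideanSpace.basisFun (Fin 2) ℝ) rfl]
  simp [Module.Basis.det_apply, Matrix.det_fin_two, Module.Basis.toMatrix_apply, mul_comm]

theorem rot_pi_div_two (d : Plane) : rot (π / 2) d = planeOrientation.rightAngleRotation d := by
  refine ext_inner_right ℝ fun y ↦ ?_
  rw [Orientation.inner_rightAngleRotation_left, planeOrientation_areaForm, PiLp.inner_apply,
    Fin.sum_univ_two]
  simp only [rot, cos_pi_div_two, sin_pi_div_two, WithLp.equiv_symm_apply, Matrix.cons_val_zero,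
    Matrix.cons_val_one, Matrix.cons_val_fin_one, RCLike.inner_apply, ringHom_apply]
  ring

theorem inner_nonneg_of_mem_wedge {q d p : Plane} (hp : p ∈ wedge (π / 2) q d) :
    0 ≤ ⟪d, p - q⟫ := by
  obtain ⟨s, t, hs, -, rfl⟩ := hp
  calc 0 ≤ s * ‖d‖ ^ 2 := by positivity
    _ = _ := by simp [rot_pi_div_two, add_assoc, inner_add_right, inner_smul_right]

theorem areaForm_nonneg_of_mem_wedge {q d p : Plane} (hp : p ∈ wedge (π / 2) q d) :
    0 ≤ ω d (p - q) := by
  obtain ⟨s, t, -, ht, rfl⟩ := hp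
  calc 0 ≤ t * ‖d‖ ^ 2 := by positivity
    _ = _ := by simp [rot_pi_div_two, add_assoc]

theorem apex_notMem_openSegment {q d x y : Plane} (hd : d ≠ 0) (hx : x ∈ wedge (π / 2) q d)
    (hy : y ∈ wedge (π / 2) q d) (hxy : x ≠ y) : q ∉ openSegment ℝ x y := by
  rintro ⟨a, b, ha, hb, hab, hq⟩
  have vanish (f : Plane →ₗ[ℝ] ℝ) (hfx : 0 ≤ f (x - q)) (hfy : 0 ≤ f (y - q)) :
      f (y - x) = 0 := by
    have hsum : a * f (x - q) + b * f (y - q) = 0 := by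
      rw [← smul_eq_mul, ← smul_eq_mul, ← map_smul, ← map_smul, ← map_add]
      convert map_zero f
      rw [smul_sub, smul_sub, sub_add_sub_comm, hq, ← add_smul, hab, one_smul, sub_self]
    have hfx0 : f (x - q) = 0 := by nlinarith [mul_nonneg hb.le hfy]
    have hfy0 : f (y - q) = 0 := by nlinarith [mul_nonneg ha.le hfx]
    rw [← sub_sub_sub_cancel_right y x q, map_sub, hfx0, hfy0, sub_zero]
  have hinner : ⟪d, y - x⟫ = 0 :=
    vanish (innerₛₗ ℝ d) (inner_nonneg_of_mem_wedge hx) (inner_nonneg_of_mem_wedge hy)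
  have harea : ω d (y - x) = 0 :=
    vanish (ω d) (areaForm_nonneg_of_mem_wedge hx) (areaForm_nonneg_of_mem_wedge hy)
  have h := planeOrientation.inner_sq_add_areaForm_sq d (y - x)
  simp [hinner, harea, hd, sub_eq_zero, hxy.symm] at h

theorem self_mem_arm1 (q d : Plane) : q ∈ arm1 q d := ⟨0, le_rfl, by simp⟩

theorem ClosestOn.eq_of_mem {q p : Plane} {A : Set Plane} (h : ClosestOn q A p) (hq : q ∈ A) :
    p = q := by
  simpa [eq_comm] using h.2 q hq

theorem DirLine.dir_ne_zero (L : DirLine) : L.dir ≠ 0 :=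
  norm_ne_zero_iff.1 (by simp [L.norm_dir])

namespace ConvexPolygon

variable {O : ConvexPolygon} {v x u : Plane}

theorem convex_body (O : ConvexPolygon) : Convex ℝ O.body := convex_convexHull ℝ _

theorem mem_body_of_mem_verts (hv : v ∈ O.verts) : v ∈ O.body := subset_convexHull ℝ _ hv

theorem Adj.areaForm_nonneg (o : Orientation ℝ Plane (Fin 2)) (h : O.Adj v x) {z : Plane}
    (hz : z ∈ O.body) (hpos : 0 < o.areaForm (x - v) (z - v)) :
    ∀ p ∈ O.body, 0 ≤ o.areaForm (x - v) (p - v) :=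
  (areaForm_nonneg_or_nonpos_of_notMem_interior o O.convex_body
    (mem_body_of_mem_verts h.1) (mem_body_of_mem_verts h.2.1)
    (midpoint_mem_openSegment v x) (h.2.2.2 (midpoint_mem_segment v x)).2).resolve_right
    fun hneg ↦ (hneg z hz).not_gt hpos

theorem exists_adj_inner_neg (h : π / 2 < O.intAngle v) :
    ∃ u w, O.Adj v u ∧ O.Adj v w ∧ ⟪u - v, w - v⟫ < 0 := by
  contrapose! h
  refine Real.sSup_le ?_ (by positivity)
  rintro _ ⟨u, w, hu, hw, -, rfl⟩
  exact Real.arccos_le_pi_div_two.2 (div_nonneg (h u w hu hw) (by positivity))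

theorem exists_inner_neg_of_areaForm_nonneg (o : Orientation ℝ Plane (Fin 2))
    (h : π / 2 < O.intAngle v) (hxv : x ≠ v)
    (hside : ∀ p ∈ O.body, 0 ≤ o.areaForm (x - v) (p - v)) :
    ∃ n ∈ O.body, ⟪x - v, n - v⟫ < 0 := by
  obtain ⟨u, w, hu, hw, huw⟩ := exists_adj_inner_neg h
  have hub := mem_body_of_mem_verts hu.2.1
  have hwb := mem_body_of_mem_verts hw.2.1
  by_contra! hn
  exact huw.not_ge <| inner_nonneg_of_areaForm_nonneg o (sub_ne_zero.2 hxv)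
    (hn u hub) (hn w hwb) (hside u hub) (hside w hwb)

theorem inner_neg_of_body_subset_cone (o : Orientation ℝ Plane (Fin 2))
    (h : π / 2 < O.intAngle v) (hxu : 0 < o.areaForm (x - v) u)
    (hx : ∀ p ∈ O.body, 0 ≤ o.areaForm (x - v) (p - v))
    (hu : ∀ p ∈ O.body, 0 ≤ o.areaForm (p - v) u) : ⟪x - v, u⟫ < 0 := by
  have hxv : x ≠ v := by
    rintro rfl
    simp at hxu
  obtain ⟨n, hn, hinner⟩ := exists_inner_neg_of_areaForm_nonneg o h hxv hx
  exact inner_neg_of_mem_cone o hxu (hx n hn) (hu n hn) hinner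

end ConvexPolygon

theorem inner_neg_and_areaForm_pos_of_closestOn {S : Set Plane} {q d v₁ v₂ : Plane}
    (h₁ : ClosestOn q (arm1 q d ∩ S) v₁) (h₂ : ClosestOn q (arm2 (π / 2) q d ∩ S) v₂)
    (hd : d ≠ 0) (hne : v₁ ≠ v₂) :
    ⟪d, v₂ - v₁⟫ < 0 ∧ 0 < ω d (v₂ - v₁) := by
  obtain ⟨⟨a, ha, hv₁⟩, hS₁⟩ := h₁.1
  obtain ⟨⟨b, hb, hv₂⟩, hS₂⟩ := h₂.1
  have ha0 : a ≠ 0 := by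
    rintro rfl
    have hq : v₁ = q := by simpa using hv₁
    exact hne (hq.trans (h₂.eq_of_mem ⟨self_mem_arm1 q _, hq ▸ hS₁⟩).symm)
  have hb0 : b ≠ 0 := by
    rintro rfl
    have hq : v₂ = q := by simpa using hv₂
    exact hne ((h₁.eq_of_mem ⟨self_mem_arm1 q d, hq ▸ hS₂⟩).trans hq.symm)
  have hchord : v₂ - v₁ = b • planeOrientation.rightAngleRotation d - a • d := by
    rw [hv₁, hv₂, rot_pi_div_two]
    abel
  rw [hchord]
  constructor
  · simpa [inner_sub_right, inner_smul_right, hd] using ha.lt_of_ne' ha0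
  · simpa [hd] using hb.lt_of_ne' hb0

theorem exists_pos_eq_add_smul_sub {S : Set Plane} {L : DirLine} {q d x y : Plane}
    (hq : L.mem q) (hx : L.mem x) (hy : ∃ t : ℝ, 0 < t ∧ y = x + t • L.dir)
    (hray : ∃ s : ℝ, 0 ≤ s ∧ q + s • L.dir ∈ S) (hqxy : q ∉ segment ℝ x y)
    (hS : ∀ p ∈ S, 0 ≤ ⟪d, p - y⟫) (hd : ⟪d, y - x⟫ < 0) :
    ∃ r : ℝ, 0 < r ∧ x = q + r • (y - x) := by
  obtain ⟨a, rfl⟩ := hq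
  obtain ⟨b, rfl⟩ := hx
  obtain ⟨t, ht, rfl⟩ := hy
  obtain ⟨s, hs, hmem⟩ := hray
  rw [add_sub_cancel_left] at hd ⊢
  refine ⟨(b - a) / t, div_pos (sub_pos.2 ?_) ht, ?_⟩
  · by_contra! hba
    obtain hle | hlt := le_or_gt a (b + t)
    · rw [segment_eq_image'] at hqxy
      refine hqxy ⟨(a - b) / t,
        ⟨div_nonneg (by linarith) ht.le, (div_le_one ht).2 (by linarith)⟩, ?_⟩
      beta_reduce
      rw [add_sub_cancel_left, smul_smul, div_mul_cancel₀ _ ht.ne']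
      module
    · -- The ray leaves `q` away from the half-plane `0 ≤ ⟪d, · - y⟫`.
      have hdir : ⟪d, L.dir⟫ < 0 := by
        rw [inner_smul_right] at hd
        exact neg_of_mul_neg_right hd ht.le
      have hnonneg := hS _ hmem
      rw [show L.pt + a • L.dir + s • L.dir - (L.pt + b • L.dir + t • L.dir) =
        (a - (b + t) + s) • L.dir by module, inner_smul_right] at hnonneg
      exact hnonneg.not_gt (mul_neg_of_pos_of_neg (by linarith) hdir)
  · rw [smul_smul, div_mul_cancel₀ _ ht.ne']
    module

namespace IsValidProbe

variable {O : ConvexPolygon} {q d q' d' v x p : Plane}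

theorem ne_zero (h : IsValidProbe (π / 2) O q d) : d ≠ 0 :=
  norm_ne_zero_iff.1 (by simp [h.1])

theorem areaForm_sub_nonneg (h : IsValidProbe (π / 2) O q d) (hv : v ∈ arm1 q d)
    (hp : p ∈ O.body) : 0 ≤ ω d (p - v) := by
  obtain ⟨a, -, rfl⟩ := hv
  simpa using areaForm_nonneg_of_mem_wedge (h.2.1 hp)

theorem inner_sub_nonneg (h : IsValidProbe (π / 2) O q d) (hv : v ∈ arm2 (π / 2) q d)
    (hp : p ∈ O.body) : 0 ≤ ⟪d, p - v⟫ := by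
  obtain ⟨b, -, rfl⟩ := hv
  simpa [rot_pi_div_two, inner_sub_right, inner_add_right, inner_smul_right] using
    inner_nonneg_of_mem_wedge (h.2.1 hp)

theorem apex_notMem_segment {y : Plane} (h : IsValidProbe (π / 2) O q d)
    (hv : ClosestOn q (arm1 q d ∩ O.body) v) (hx : x ∈ O.body) (hy : y ∈ O.body) (hxy : x ≠ y)
    (hvx : v ≠ x) (hvy : v ≠ y) : q ∉ segment ℝ x y := by
  intro hq
  obtain rfl : v = q :=
    hv.eq_of_mem ⟨self_mem_arm1 q d, O.convex_body.segment_subset hx hy hq⟩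
  exact apex_notMem_openSegment h.ne_zero (h.2.1 hx) (h.2.1 hy) hxy
    (mem_openSegment_of_ne_left_right hvx.symm hvy.symm hq)

theorem inner_pos_of_adj (h : IsValidProbe (π / 2) O q d) (hv : v ∈ arm1 q d)
    (hangle : π / 2 < O.intAngle v) (hx : 0 < ω d (x - v))
    (hside : ∀ p ∈ O.body, 0 ≤ ω (x - v) (p - v)) : 0 < ⟪d, x - v⟫ := by
  have hcone (p : Plane) : ω (p - v) (-d) = ω d (p - v) := by
    rw [map_neg, ← planeOrientation.areaForm_swap]
  have hneg := O.inner_neg_of_body_subset_cone planeOrientation hangle (u := -d)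
    ((hcone x).symm ▸ hx) hside fun p hp ↦ (hcone p).symm ▸ h.areaForm_sub_nonneg hv hp
  rwa [inner_neg_right, neg_lt_zero, real_inner_comm] at hneg

theorem areaForm_pos_of_adj (h : IsValidProbe (π / 2) O q d) (hv : v ∈ arm2 (π / 2) q d)
    (hangle : π / 2 < O.intAngle v) (hx : 0 < ⟪d, x - v⟫)
    (hside : ∀ p ∈ O.body, 0 ≤ (-planeOrientation).areaForm (x - v) (p - v)) :
    0 < ω d (x - v) := by
  set u := -planeOrientation.rightAngleRotation d
  have hcone (p : Plane) : (-planeOrientation).areaForm (p - v) u = ⟪d, p - v⟫ := by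
    simp only [u, planeOrientation.areaForm_neg_orientation, LinearMap.neg_apply, map_sub, map_neg,
      LinearMap.sub_apply, Orientation.areaForm_rightAngleRotation_right, real_inner_comm,
      inner_sub_right]
    ring
  have hneg := O.inner_neg_of_body_subset_cone (-planeOrientation) hangle (u := u)
    ((hcone x).symm ▸ hx) hside fun p hp ↦ (hcone p).symm ▸ h.inner_sub_nonneg hv hp
  rwa [inner_neg_right, neg_lt_zero, real_inner_comm,
    planeOrientation.inner_rightAngleRotation_left] at hneg

theorem inner_pos_of_areaForm_apex_neg (h : IsValidProbe (π / 2) O q d)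
    (h' : IsValidProbe (π / 2) O q' d') (hv : v ∈ arm1 q d) (hq' : ω d (q' - v) < 0) :
    0 < ⟪d, d'⟫ := by
  obtain ⟨_, ⟨s, hs, rfl⟩, hp⟩ := h'.2.2.2
  have hexpand : ω d (q' + s • rot (π / 2) d' - v) = ω d (q' - v) + s * ⟪d, d'⟫ := by
    simp only [rot_pi_div_two, map_sub, map_add, map_smul,
      Orientation.areaForm_rightAngleRotation_right, smul_eq_mul]
    ring
  have hnonneg := hexpand ▸ h.areaForm_sub_nonneg hv hp
  exact pos_of_mul_pos_right (by linarith) hs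

theorem inner_pos_and_areaForm_pos (h : IsValidProbe (π / 2) O q d)
    (h' : IsValidProbe (π / 2) O q' d') (hv : v ∈ arm1 q d) (hvO : v ∈ O.body) {w : Plane} {r : ℝ}
    (hr : 0 < r) (hvr : v = q' + r • w) (hdw : ⟪d, w⟫ < 0) (hωdw : 0 < ω d w) :
    0 < ⟪d, d'⟫ ∧ 0 < ω d d' ∧ 0 < ω d' w := by
  have hq' : ω d (q' - v) < 0 := by
    rw [hvr, sub_add_cancel_left, map_neg, map_smul, smul_eq_mul]
    exact neg_neg_of_pos (mul_pos hr hωdw)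
  have hdd' := h.inner_pos_of_areaForm_apex_neg h' hv hq'
  have hd'w : 0 ≤ ⟪d', w⟫ := by
    have hnonneg := inner_nonneg_of_mem_wedge (h'.2.1 hvO)
    rw [hvr, add_sub_cancel_left, inner_smul_right] at hnonneg
    exact nonneg_of_mul_nonneg_right hnonneg hr
  exact ⟨hdd', areaForm_pos_of_inner planeOrientation hdw hωdw hdd' hd'w⟩

theorem not_adj_of_mem_arm (h : IsValidProbe (π / 2) O q d) (h' : IsValidProbe (π / 2) O q' d')
    {z : Plane} (hx : x ∈ arm1 q' d') (hv : v ∈ arm2 (π / 2) q d)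
    (hanglex : π / 2 < O.intAngle x) (hanglev : π / 2 < O.intAngle v) (hz : z ∈ O.body)
    (hside : 0 < ω (v - x) (z - x)) (hd'v : 0 < ω d' (v - x)) (hdx : 0 < ⟪d, x - v⟫)
    (hdd' : 0 < ⟪d, d'⟫) (hωdd' : 0 < ω d d') : ¬ O.Adj x v := by
  intro hadj
  have hsidex := hadj.areaForm_nonneg planeOrientation hz hside
  have hsidev (p : Plane) (hp : p ∈ O.body) :
      0 ≤ (-planeOrientation).areaForm (x - v) (p - v) := by
    have hcancel : ω (v - x) (p - v) = ω (v - x) (p - x) := by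
      rw [← sub_sub_sub_cancel_right p v x, map_sub, planeOrientation.areaForm_apply_self, sub_zero]
    rw [← neg_sub v x, planeOrientation.areaForm_neg_orientation]
    simpa only [map_neg, LinearMap.neg_apply, neg_neg, hcancel] using hsidex p hp
  have hobtuse : 0 < ⟪d', v - x⟫ := h'.inner_pos_of_adj hx hanglex hd'v hsidex
  have hacute : 0 < ω d (x - v) := h.areaForm_pos_of_adj hv hanglev hdx hsidev
  have hnonneg : 0 ≤ ⟪d', x - v⟫ := inner_nonneg_of_areaForm_nonneg planeOrientation h.ne_zero
    hdd'.le hdx.le hωdd'.le hacute.le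
  rw [← neg_sub, inner_neg_right] at hnonneg
  linarith

theorem not_adj_of_chord (h : IsValidProbe (π / 2) O q d) (h' : IsValidProbe (π / 2) O q' d')
    {v₁ v₂ v₃ : Plane} (hv₁ : v₁ ∈ arm1 q d) (hv₁O : v₁ ∈ O.body) (hv₂ : v₂ ∈ arm2 (π / 2) q d)
    (hv₃ : v₃ ∈ arm1 q' d') (hv₃O : v₃ ∈ O.body) {r : ℝ} (hr : 0 < r)
    (hv₁q' : v₁ = q' + r • (v₂ - v₁)) (hdw : ⟪d, v₂ - v₁⟫ < 0) (hωdw : 0 < ω d (v₂ - v₁))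
    (hangle₂ : π / 2 < O.intAngle v₂) (hangle₃ : π / 2 < O.intAngle v₃) : ¬ O.Adj v₃ v₂ := by
  obtain ⟨hdd', hωdd', hωd'w⟩ := h.inner_pos_and_areaForm_pos h' hv₁ hv₁O hr hv₁q' hdw hωdw
  have ⟨c, _, hv₃q'⟩ := hv₃
  set w := v₂ - v₁ with hw
  have hv₁v₃ : v₁ - v₃ = r • w - c • d' := by
    linear_combination (norm := module) hv₁q' - hv₃q'
  have hv₂v₃ : v₂ - v₃ = (1 + r) • w - c • d' := by
    linear_combination (norm := module) hv₁q' - hv₃q' - hw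
  have hc : 0 < c := by
    have hnonneg := h.areaForm_sub_nonneg hv₁ hv₃O
    rw [← neg_sub, hv₁v₃, neg_sub, map_sub, map_smul, map_smul, smul_eq_mul, smul_eq_mul]
      at hnonneg
    exact pos_of_mul_pos_left (by linarith [mul_pos hr hωdw]) hωdd'.le
  refine h.not_adj_of_mem_arm h' hv₃ hv₂ hangle₃ hangle₂ hv₁O ?_ ?_ ?_ hdd' hωdd'
  · calc 0 < c * ω d' w := mul_pos hc hωd'w
      _ = ω (v₂ - v₃) (v₁ - v₃) := by
        rw [hv₂v₃, hv₁v₃]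
        simp only [map_sub, map_smul, LinearMap.sub_apply, LinearMap.smul_apply, smul_eq_mul,
          Orientation.areaForm_apply_self, planeOrientation.areaForm_swap w d']
        ring
  · calc 0 < (1 + r) * ω d' w := by positivity
      _ = ω d' (v₂ - v₃) := by simp [hv₂v₃]
  · calc 0 < c * ⟪d, d'⟫ - (1 + r) * ⟪d, w⟫ :=
          sub_pos.2 <| (mul_neg_of_pos_of_neg (by linarith) hdw).trans (mul_pos hc hdd')
      _ = ⟪d, v₃ - v₂⟫ := by
        rw [← neg_sub v₂, hv₂v₃, neg_sub, inner_sub_right _ (c • d'), inner_smul_right,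
          inner_smul_right]

end IsValidProbe

theorem not_an_edge_general (O : ConvexPolygon) (q d v₁ v₂ : Plane)
    (hp1 : IsValidProbe (π / 2) O q d) (hc1 : ClosestOn q (arm1 q d ∩ O.body) v₁)
    (hc2 : ClosestOn q (arm2 (π / 2) q d ∩ O.body) v₂)
    (L : DirLine) (hL1 : L.mem v₁) (hL2 : ∃ t : ℝ, 0 < t ∧ v₂ = v₁ + t • L.dir)
    (q' d' v₃ : Plane) (hp2 : IsValidProbeAlong (π / 2) O L q' d')
    (hc3 : ClosestOn q' (arm1 q' d' ∩ O.body) v₃) (hv₃ : v₃ ≠ v₁)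
    (hno₂ : π / 2 < O.intAngle v₂) (hno₃ : π / 2 < O.intAngle v₃) : ¬ O.Adj v₃ v₂ := by
  intro hadj
  have hne : v₁ ≠ v₂ := by
    obtain ⟨t, ht, rfl⟩ := hL2
    simp [ht.ne', L.dir_ne_zero]
  obtain ⟨hdw, hωdw⟩ := inner_neg_and_areaForm_pos_of_closestOn hc1 hc2 hp1.ne_zero hne
  obtain ⟨hprobe', hq', hray⟩ := hp2
  obtain ⟨r, hr, hv₁⟩ := exists_pos_eq_add_smul_sub hq' hL1 hL2 hray
    (hprobe'.apex_notMem_segment hc3 hc1.1.2 hc2.1.2 hne hv₃ hadj.2.2.1)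
    (fun p hp ↦ hp1.inner_sub_nonneg hc2.1.1 hp) hdw
  exact hp1.not_adj_of_chord hprobe' hc1.1.1 hc1.1.2 hc2.1.1 hc3.1.1 hc3.1.2 hr hv₁ hdw hωdw
    hno₂ hno₃ hadj

end Probes

/-- after the two initialization probes of a polygon with at least 5 vertices
and no narrow vertices (`ω = π/2`), the segment joining `v₃` and `v₂` is not an edge of `O`. -/
theorem not_an_edge (O : ConvexPolygon) (hcard : 5 ≤ O.verts.card)
    (hno : ∀ v ∈ O.verts, Real.pi / 2 < O.intAngle v)
    (q d v₁ v₂ : Plane) (hp1 : IsValidProbe (Real.pi / 2) O q d)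
    (hc1 : ClosestOn q (arm1 q d ∩ O.body) v₁)
    (hc2 : ClosestOn q (arm2 (Real.pi / 2) q d ∩ O.body) v₂)
    (L : DirLine) (hL1 : L.mem v₁) (hL2 : ∃ t : ℝ, 0 < t ∧ v₂ = v₁ + t • L.dir)
    (q' d' v₃ v₄ : Plane) (hp2 : IsValidProbeAlong (Real.pi / 2) O L q' d')
    (hc3 : ClosestOn q' (arm1 q' d' ∩ O.body) v₃)
    (hc4 : ClosestOn q' (arm2 (Real.pi / 2) q' d' ∩ O.body) v₄)
    (hv₃ : v₃ ≠ v₁ ∧ v₃ ≠ v₂) (hv₄ : v₄ ≠ v₁ ∧ v₄ ≠ v₂) :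
    ¬ O.Adj v₃ v₂ := by
  intro hadj
  exact not_an_edge_general O q d v₁ v₂ hp1 hc1 hc2 L hL1 hL2 q' d' v₃ hp2 hc3 hv₃.1
    (hno v₂ hadj.2.1) (hno v₃ hadj.1) hadj

end
end

section
/- Let ω satisfy 0 < ω ≤ π/2, let Ψ be a closed disk in ℝ² and let p be a point. There exists a deterministic adaptive probing strategy (depending on ω, Ψ and p) that reconstructs every convex polygon O with p ∈ O ⊂ Ψ all of whose interior angles are strictly greater than ω using at most 2n − 2 valid ω-probes, where n is the number of vertices of O. -/
open Real EuclideanGeometry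

noncomputable section

/-- The outcome of a probe: apex, arm direction, and the two closest contact points. -/
structure Outcome where
  apex : Plane
  dir : Plane
  p₁ : Plane
  p₂ : Plane

/-- `out` is the outcome of a valid `ω`-probe of `O` along `L`: a valid probe together with
the points of each arm ∩ `O` closest to the apex. -/
def IsOutcome (ω : ℝ) (O : ConvexPolygon) (L : DirLine) (out : Outcome) : Prop :=
  IsValidProbeAlong ω O L out.apex out.dir ∧
  ClosestOn out.apex (arm1 out.apex out.dir ∩ O.body) out.p₁ ∧
  ClosestOn out.apex (arm2 ω out.apex out.dir ∩ O.body) out.p₂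

/-- The answer to a query: a probe outcome, or `none` (the token "miss"). -/
abbrev Answer := Option Outcome

/-- A deterministic adaptive probing strategy: maps each finite sequence of answers either to
a next query (a directed line) or to a final output (a convex polygon). -/
abbrev Strategy := List Answer → DirLine ⊕ ConvexPolygon

/-- A correct answer to query `L` against the polygon `O`: the outcome of some valid `ω`-probe
of `O` along `L` if one exists, and "miss" otherwise. -/
def ValidAnswer (ω : ℝ) (O : ConvexPolygon) (L : DirLine) : Answer → Prop
  | none => ¬ ∃ q d, IsValidProbeAlong ω O L q d
  | some out => IsOutcome ω O L out

/-- `l` is (a prefix of) a play of the strategy `S` against `O`: at every proper prefix,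
`S` produces a query, and the corresponding entry of `l` is a correct answer to it. -/
def Consistent (ω : ℝ) (S : Strategy) (O : ConvexPolygon) (l : List Answer) : Prop :=
  ∀ (i : ℕ) (h : i < l.length),
    ∃ L, S (l.take i) = Sum.inl L ∧ ValidAnswer ω O L (l.get ⟨i, h⟩)

/-- `S` reconstructs `O` using at most `k` probes: in every play against `O`, every final
output of `S` is exactly `O`, and `S` produces a final output after at most `k` queries. -/
def Reconstructs (ω : ℝ) (S : Strategy) (O : ConvexPolygon) (k : ℕ) : Prop :=
  (∀ l, Consistent ω S O l → ∀ P, S l = Sum.inr P → P.verts = O.verts) ∧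
  (∀ l, Consistent ω S O l → l.length = k → ∃ P, S l = Sum.inr P)

/-- There is a play of `S` against `O` in which either `S` never outputs `O`
(it plays forever, or outputs a polygon different from `O`), or `S` makes at least `m`
queries before outputting. -/
def BadPlay (ω : ℝ) (S : Strategy) (O : ConvexPolygon) (m : ℕ) : Prop :=
  (∃ f : ℕ → Answer, ∀ k : ℕ, Consistent ω S O (List.ofFn (fun i : Fin k => f i))) ∨
  (∃ l P, Consistent ω S O l ∧ S l = Sum.inr P ∧ (P.verts ≠ O.verts ∨ m ≤ l.length))

/-!
Since `O` has no narrow vertex, the apex of a valid probe lies outside `O`. The two contact points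
of the probe are then distinct vertices of `O`, and the line along which the apex travels passes
either strictly between the contact points or along an arm.

The strategy knows the set `K` of contact points found so far and the intersection `R` of the
wedges seen so far, so that `K ⊆ vertices of O ⊆ O ⊆ R`. If every edge of the convex hull of `K`
leaves `R` on one side, then `O` is the convex hull of `K`. Otherwise the strategy probes along a
violating edge: either an arm of the new wedge lies on the line of that edge, which is thereby seen
to be an edge of `O`, or there is a new vertex beyond it.

Every later probe thus finds a new vertex of `O` or confirms a new edge of `O`, and the first two
probes together make four such discoveries. As only `2 n` discoveries can be made, `2 n - 2` probes
suffice. A line that meets `O` always carries a valid probe, by the intermediate value theorem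
applied to the apex of the supporting wedge as the wedge rotates.
-/

open scoped NNReal EuclideanSpace

lemma eq_or_eq_of_wbtw_of_convexIndependent {𝕜 E : Type*} [Field 𝕜] [LinearOrder 𝕜]
    [IsStrictOrderedRing 𝕜] [AddCommGroup E] [Module 𝕜 E] {V : Set E}
    (hV : ConvexIndependent 𝕜 ((↑) : V → E)) {a b c : E} (ha : a ∈ V) (hb : b ∈ V) (hc : c ∈ V)
    (h : Wbtw 𝕜 a b c) : b = a ∨ b = c := by
  have hac : ({a, c} : Set E) ⊆ V := by simp [Set.insert_subset_iff, ha, hc]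
  refine convexIndependent_set_iff_inter_convexHull_subset.1 hV _ hac ⟨hb, ?_⟩
  rw [convexHull_pair]
  exact h.mem_segment

section AreaForm

variable {E : Type*} [NormedAddCommGroup E] [InnerProductSpace ℝ E]
  [Fact (Module.finrank ℝ E = 2)] (o : Orientation ℝ E (Fin 2))

lemma eq_zero_of_inner_eq_zero_of_areaForm_eq_zero {d z : E} (hd : d ≠ 0)
    (hinner : inner ℝ d z = 0) (harea : o.areaForm d z = 0) : z = 0 := by
  have h := o.inner_sq_add_areaForm_sq d z
  have hd' : ‖d‖ ≠ 0 := norm_ne_zero_iff.2 hd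
  simpa [hinner, harea, hd', hd] using h.symm

lemma areaForm_smul_eq_add (d e x : E) :
    o.areaForm d e • x = o.areaForm x e • d + o.areaForm d x • e := by
  rcases eq_or_ne d 0 with rfl | hd
  · simp
  refine sub_eq_zero.1 (eq_zero_of_inner_eq_zero_of_areaForm_eq_zero o hd ?_ ?_)
  · have h := o.inner_mul_areaForm_sub d x e
    simp only [inner_sub_right, inner_add_right, real_inner_smul_right,
      real_inner_self_eq_norm_sq]
    linear_combination h
  · simp only [map_sub, map_add, map_smul, smul_eq_mul, Orientation.areaForm_apply_self]
    ring

lemma eq_zero_of_areaForm_eq_zero {d e x : E} (hde : o.areaForm d e ≠ 0)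
    (hd : o.areaForm d x = 0) (he : o.areaForm e x = 0) : x = 0 := by
  have h := areaForm_smul_eq_add o d e x
  rw [o.areaForm_swap x e, hd, he] at h
  simpa [hde] using h

lemma exists_eq_smul_of_areaForm_eq_zero {d x : E} (hd : d ≠ 0) (h : o.areaForm d x = 0) :
    ∃ t : ℝ, x = t • d := by
  have hcramer := areaForm_smul_eq_add o d (o.rightAngleRotation d) x
  have hnorm : ‖d‖ ^ 2 ≠ 0 := by simpa using hd
  rw [h, zero_smul, add_zero, o.areaForm_rightAngleRotation_right,
    real_inner_self_eq_norm_sq] at hcramer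
  exact ⟨_, by rw [← smul_smul, ← hcramer, inv_smul_smul₀ hnorm]⟩

lemma areaForm_sub_sub_rotate (a b c : E) :
    o.areaForm (b - a) (c - a) = o.areaForm (c - b) (a - b) := by
  simp only [map_sub, LinearMap.sub_apply, Orientation.areaForm_apply_self]
  rw [o.areaForm_swap c a, o.areaForm_swap c b, o.areaForm_swap b a]
  ring

lemma areaForm_sub_sub_ne_zero_of_convexIndependent {V : Set E}
    (hV : ConvexIndependent ℝ ((↑) : V → E)) {a b c : E} (ha : a ∈ V) (hb : b ∈ V) (hc : c ∈ V)
    (hab : a ≠ b) (hac : a ≠ c) (hbc : b ≠ c) : o.areaForm (b - a) (c - a) ≠ 0 := by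
  intro h
  obtain ⟨t, ht⟩ := exists_eq_smul_of_areaForm_eq_zero o (sub_ne_zero.2 hab.symm) h
  have hcol : Collinear ℝ {a, b, c} := by
    refine (collinear_iff_of_mem (Set.mem_insert a _)).2 ⟨b - a, ?_⟩
    rintro x (rfl | rfl | rfl)
    · exact ⟨0, by simp⟩
    · exact ⟨1, by simp⟩
    · exact ⟨t, by simp [← ht]⟩
  rcases hcol.wbtw_or_wbtw_or_wbtw with h | h | h
  · exact (eq_or_eq_of_wbtw_of_convexIndependent hV ha hb hc h).elim hab.symm hbc
  · exact (eq_or_eq_of_wbtw_of_convexIndependent hV hb hc ha h).elim hbc.symm hac.symm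
  · exact (eq_or_eq_of_wbtw_of_convexIndependent hV hc ha hb h).elim hac hab

/-- Every point of `S` lies on or to the left of the line from `a` to `b`. -/
def LiesLeft (S : Set E) (a b : E) : Prop :=
  ∀ x ∈ S, 0 ≤ o.areaForm (b - a) (x - a)

/-- The pair `(a, b)` is an edge of the convex hull of `K`, traversed counterclockwise and with
endpoints in `K`. -/
def IsHullEdge (K : Set E) (a b : E) : Prop :=
  a ∈ K ∧ b ∈ K ∧ a ≠ b ∧ LiesLeft o K a b

variable {o} in
lemma LiesLeft.mono {S T : Set E} {a b : E} (h : LiesLeft o T a b) (hST : S ⊆ T) :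
    LiesLeft o S a b := fun x hx => h x (hST hx)

/- The tangency point is the one of smallest slope with respect to a functional separating `x`
from `K`. -/
lemma exists_liesLeft_of_notMem_convexHull {K : Set E} (hfin : K.Finite) (hne : K.Nonempty)
    {x : E} (hx : x ∉ convexHull ℝ K) : ∃ u ∈ K, LiesLeft o K x u := by
  have : FiniteDimensional ℝ E := .of_fact_finrank_eq_succ 1
  obtain ⟨f, c, hfx, hf⟩ := geometric_hahn_banach_point_closed (convex_convexHull ℝ K)
    (hfin.isClosed_convexHull (𝕜 := ℝ)) hx
  set n : E := (InnerProductSpace.toDual ℝ E).symm f with hn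
  have hpos : ∀ k ∈ K, 0 < inner ℝ n (k - x) := fun k hk => by
    have := hf k (subset_convexHull ℝ K hk)
    rw [hn, InnerProductSpace.toDual_symm_apply, map_sub]
    linarith
  obtain ⟨u, hu, hmin⟩ := Set.exists_min_image K
    (fun k => o.areaForm n (k - x) / inner ℝ n (k - x)) hfin hne
  refine ⟨u, hu, fun k hk => ?_⟩
  have hslope := (div_le_div_iff₀ (hpos u hu) (hpos k hk)).1 (hmin k hk)
  have hn0 : n ≠ 0 := by
    intro h0
    simpa [h0] using hpos u hu
  refine nonneg_of_mul_nonneg_right ?_ (by positivity : 0 < ‖n‖ ^ 2)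
  rw [← o.inner_mul_areaForm_sub n (u - x) (k - x)]
  linarith

variable {o} in
lemma IsHullEdge.right_unique {K : Set E} (hK : ConvexIndependent ℝ ((↑) : K → E)) {a b c : E}
    (hb : IsHullEdge o K a b) (hc : IsHullEdge o K a c) : b = c := by
  obtain ⟨ha, hbK, hab, hleft⟩ := hb
  obtain ⟨-, hcK, hac, hleft'⟩ := hc
  by_contra hbc
  refine areaForm_sub_sub_ne_zero_of_convexIndependent o hK ha hbK hcK hab hac hbc ?_
  have h := hleft' b hbK
  rw [o.areaForm_swap] at h
  exact le_antisymm (by linarith) (hleft c hcK)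

lemma exists_isHullEdge {K : Set E} (hK : ConvexIndependent ℝ ((↑) : K → E)) (hfin : K.Finite)
    (hnt : K.Nontrivial) {w : E} (hw : w ∈ K) : ∃ v, IsHullEdge o K w v := by
  obtain ⟨v, hv, hleft⟩ := exists_liesLeft_of_notMem_convexHull o hfin.sdiff (hnt.exists_ne w)
    (convexIndependent_set_iff_notMem_convexHull_sdiff.1 hK w hw)
  refine ⟨v, hw, hv.1, Ne.symm hv.2, fun k hk => ?_⟩
  rcases eq_or_ne k w with rfl | hkw
  · simp
  · exact hleft k ⟨hk, hkw⟩

/- Otherwise pick `x ∈ V \ K` and the point `w` of `K` on the right tangent from `x`: the hull edge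
of `K` leaving `w` has `x` strictly on its right. -/
lemma eq_of_forall_isHullEdge_liesLeft {V K : Set E}
    (hV : ConvexIndependent ℝ ((↑) : V → E)) (hKV : K ⊆ V) (hfin : K.Finite) (hK : K.Nontrivial)
    (hedge : ∀ w v, IsHullEdge o K w v → LiesLeft o V w v) : K = V := by
  refine hKV.antisymm fun x hx => ?_
  by_contra hxK
  have hx' : x ∉ convexHull ℝ K := fun h =>
    hxK (convexIndependent_set_iff_inter_convexHull_subset.1 hV K hKV ⟨hx, h⟩)
  obtain ⟨w, hw, hright⟩ := exists_liesLeft_of_notMem_convexHull (-o) hfin hK.nonempty hx'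
  obtain ⟨v, hwv⟩ := exists_isHullEdge o (hV.mono hKV) hfin hK hw
  have hv := hwv.2.1
  have h1 := hedge w v hwv x hx
  have h2 := hright v hv
  rw [o.areaForm_neg_orientation, LinearMap.neg_apply, LinearMap.neg_apply,
    areaForm_sub_sub_rotate o x w v] at h2
  refine areaForm_sub_sub_ne_zero_of_convexIndependent o hV (hKV hw) (hKV hv) hx hwv.2.2.1
    (ne_of_mem_of_not_mem hw hxK) (ne_of_mem_of_not_mem hv hxK) ?_
  linarith

/-- The least value on `K` of the area form with `d`. For `d ≠ 0`, the points `x` at which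
`o.areaForm d x` takes this value form the line in direction `d` that supports `K` from the
right. -/
def leftSupport (K : Set E) (d : E) : ℝ := sInf (o.areaForm d '' K)

lemma continuous_areaForm : Continuous fun x : E × E => o.areaForm x.1 x.2 := by
  simp_rw [← o.inner_rightAngleRotation_left]
  exact (o.rightAngleRotation.continuous.comp continuous_fst).inner continuous_snd

section LeftSupport

variable {o} {K : Set E} (hK : IsCompact K)
include hK

lemma leftSupport_le {x : E} (hx : x ∈ K) (d : E) : leftSupport o K d ≤ o.areaForm d x :=
  csInf_le (hK.image (o.areaForm' d).continuous).bddBelow (Set.mem_image_of_mem _ hx)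

lemma exists_areaForm_eq_leftSupport (hne : K.Nonempty) (d : E) :
    ∃ x ∈ K, o.areaForm d x = leftSupport o K d := by
  obtain ⟨x, hx, h⟩ := hK.exists_sInf_image_eq hne (o.areaForm' d).continuous.continuousOn
  exact ⟨x, hx, h.symm⟩

lemma continuous_leftSupport : Continuous (leftSupport o K) :=
  hK.continuous_sInf (continuous_areaForm o)

end LeftSupport

end AreaForm

lemma angle_le_angle_of_mem_span {V : Type*} [NormedAddCommGroup V] [InnerProductSpace ℝ V]
    {d e x y : V} (hx₀ : x ≠ 0) (hy₀ : y ≠ 0) (hx : x ∈ Submodule.span ℝ≥0 {d, e})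
    (hy : y ∈ Submodule.span ℝ≥0 {d, e}) :
    InnerProductGeometry.angle x y ≤ InnerProductGeometry.angle d e := by
  obtain ⟨s, t, rfl⟩ := Submodule.mem_span_pair.1 hx
  obtain ⟨s', t', rfl⟩ := Submodule.mem_span_pair.1 hy
  wlog h : s' * t ≤ s * t' generalizing s t s' t'
  · rw [InnerProductGeometry.angle_comm]
    exact this s' t' hy₀ hy s t hx₀ hx (by simpa [mul_comm] using (not_le.1 h).le)
  have hy' : s' • d + t' • e ∈ Submodule.span ℝ≥0 {s • d + t • e, e} := by
    rcases eq_or_ne s 0 with rfl | hs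
    · have ht : t ≠ 0 := by
        rintro rfl
        simp at hx₀
      have hs' : s' = 0 := by simpa [ht] using h
      exact Submodule.mem_span_pair.2 ⟨0, t', by simp [hs']⟩
    · refine Submodule.mem_span_pair.2 ⟨s' / s, t' - s' / s * t, ?_⟩
      have hle : s' / s * t ≤ t' := by
        rw [div_mul_eq_mul_div]
        exact div_le_of_le_mul₀ zero_le zero_le (by rwa [mul_comm t'])
      rw [smul_add, smul_smul, div_mul_cancel₀ _ hs, smul_smul, add_assoc, ← add_smul,
        add_tsub_cancel_of_le hle]
  have hx_split := InnerProductGeometry.angle_eq_angle_add_add_angle_add_of_mem_span hx₀ hx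
  have hy_split := InnerProductGeometry.angle_eq_angle_add_add_angle_add_of_mem_span hy₀ hy'
  linarith [InnerProductGeometry.angle_nonneg d (s • d + t • e),
    InnerProductGeometry.angle_nonneg (s' • d + t' • e) e]

section Rotation

/-- The standard orientation of the plane: `rot` turns counterclockwise for it, and its area form
is the planar cross product. -/
def ccw : Orientation ℝ Plane (Fin 2) :=
  (EuclideanSpace.basisFun (Fin 2) ℝ).toBasis.orientation

lemma ccw_areaForm_apply (x y : Plane) : ccw.areaForm x y = x 0 * y 1 - x 1 * y 0 := by
  rw [ccw, Orientation.areaForm_to_volumeForm,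
    Orientation.volumeForm_robust _ (EuclideanSpace.basisFun (Fin 2) ℝ) rfl,
    Module.Basis.det_apply, Matrix.det_fin_two]
  simp only [Module.Basis.toMatrix_apply, Matrix.cons_val_zero, Matrix.cons_val_one,
    Matrix.cons_val_fin_one, OrthonormalBasis.coe_toBasis_repr_apply,
    EuclideanSpace.basisFun_repr]
  ring

lemma ccw_rightAngleRotation_apply (x : Plane) : ccw.rightAngleRotation x = !₂[-x 1, x 0] := by
  refine ext_inner_right ℝ fun y => ?_
  rw [Orientation.inner_rightAngleRotation_left, ccw_areaForm_apply]
  simp only [PiLp.inner_apply, RCLike.inner_apply, conj_trivial, Fin.sum_univ_two,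
    Matrix.cons_val_zero, Matrix.cons_val_one, Matrix.cons_val_fin_one]
  ring

lemma rot_eq_rotation (θ : ℝ) (d : Plane) : rot θ d = ccw.rotation θ d := by
  rw [Orientation.rotation_apply, ccw_rightAngleRotation_apply]
  ext i
  fin_cases i
  · simp [rot, sub_eq_add_neg]
  · simp [rot, add_comm]

lemma norm_rot (θ : ℝ) (d : Plane) : ‖rot θ d‖ = ‖d‖ := by
  rw [rot_eq_rotation, LinearIsometryEquiv.norm_map]

lemma rot_rot (α β : ℝ) (d : Plane) : rot α (rot β d) = rot (α + β) d := by
  simp only [rot_eq_rotation, Orientation.rotation_rotation, Real.Angle.coe_add]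

lemma rot_zero (d : Plane) : rot 0 d = d := by
  simp [rot_eq_rotation]

lemma areaForm_rot_self (θ : ℝ) (d : Plane) :
    ccw.areaForm d (rot θ d) = Real.sin θ * ‖d‖ ^ 2 := by
  rw [rot_eq_rotation, Orientation.rotation_apply]
  simp [Real.Angle.sin_coe]

lemma areaForm_rot_rot (α β : ℝ) (d : Plane) :
    ccw.areaForm (rot α d) (rot β d) = Real.sin (β - α) * ‖d‖ ^ 2 := by
  rw [← norm_rot α d, ← areaForm_rot_self, rot_rot, sub_add_cancel]

lemma angle_rot_self {θ : ℝ} (h₀ : 0 ≤ θ) (hπ : θ ≤ Real.pi) {d : Plane} (hd : d ≠ 0) :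
    InnerProductGeometry.angle d (rot θ d) = θ := by
  have hrot : rot θ d ≠ 0 := by rwa [← norm_ne_zero_iff, norm_rot, norm_ne_zero_iff]
  rw [ccw.angle_eq_abs_oangle_toReal hd hrot, rot_eq_rotation,
    Orientation.oangle_rotation_self_right _ hd,
    Real.Angle.toReal_coe_eq_self_iff.2 ⟨by linarith [Real.pi_pos], hπ⟩, abs_of_nonneg h₀]

end Rotation

lemma isExtreme_sep_eq_of_forall_le {𝕜 E : Type*} [Field 𝕜] [LinearOrder 𝕜]
    [IsStrictOrderedRing 𝕜] [AddCommGroup E] [Module 𝕜 E] (f : E →ₗ[𝕜] 𝕜) {A : Set E} {c : 𝕜}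
    (h : ∀ x ∈ A, c ≤ f x) : IsExtreme 𝕜 A {x ∈ A | f x = c} := by
  refine ⟨fun x hx => hx.1, fun x hx y hy z hz hzxy => ⟨hx, ?_⟩⟩
  obtain ⟨a, b, ha, hb, hab, rfl⟩ := hzxy
  have hz' := hz.2
  simp only [map_add, map_smul, smul_eq_mul] at hz'
  refine le_antisymm (le_of_mul_le_mul_left ?_ ha) (h x hx)
  linear_combination hz' - c * hab + mul_le_mul_of_nonneg_left (h y hy) hb.le

lemma isExtreme_inter_of_subset {𝕜 E : Type*} [Semiring 𝕜] [PartialOrder 𝕜] [AddCommMonoid E]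
    [SMul 𝕜 E] {A B K : Set E} (hB : IsExtreme 𝕜 A B) (hK : K ⊆ A) : IsExtreme 𝕜 K (B ∩ K) :=
  ⟨Set.inter_subset_right, fun _ hx _ hy _ hz hzxy =>
    ⟨hB.left_mem_of_mem_openSegment (hK hx) (hK hy) hz.1 hzxy, hx⟩⟩

section Wedge

variable {ω : ℝ} {q d x : Plane}

lemma areaForm_rot_ne_zero (hω : 0 < Real.sin ω) (hd : d ≠ 0) :
    ccw.areaForm d (rot ω d) ≠ 0 := by
  rw [areaForm_rot_self]
  positivity

lemma mem_wedge_iff (hω : 0 < Real.sin ω) (hd : d ≠ 0) :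
    x ∈ wedge ω q d ↔
      0 ≤ ccw.areaForm d (x - q) ∧ 0 ≤ ccw.areaForm (x - q) (rot ω d) := by
  have hpos : 0 < ccw.areaForm d (rot ω d) := by
    rw [areaForm_rot_self]
    positivity
  constructor
  · rintro ⟨s, t, hs, ht, rfl⟩
    have hsub : q + s • d + t • rot ω d - q = s • d + t • rot ω d := by abel
    rw [hsub]
    simp only [map_add, map_smul, LinearMap.add_apply, LinearMap.smul_apply, smul_eq_mul,
      Orientation.areaForm_apply_self, mul_zero, zero_add, add_zero]
    exact ⟨by positivity, by positivity⟩
  · rintro ⟨h₁, h₂⟩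
    refine ⟨_, _, div_nonneg h₂ hpos.le, div_nonneg h₁ hpos.le, ?_⟩
    rw [add_assoc, ← sub_eq_iff_eq_add', div_eq_inv_mul, div_eq_inv_mul, mul_smul, mul_smul,
      ← smul_add, ← areaForm_smul_eq_add, inv_smul_smul₀ hpos.ne']

lemma arm1_subset_wedge : arm1 q d ⊆ wedge ω q d := by
  rintro _ ⟨t, ht, rfl⟩
  exact ⟨t, 0, ht, le_rfl, by simp⟩

lemma arm2_subset_wedge : arm2 ω q d ⊆ wedge ω q d := by
  rintro _ ⟨t, ht, rfl⟩
  exact ⟨0, t, le_rfl, ht, by simp⟩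

lemma apex_mem_arm1 : q ∈ arm1 q d := ⟨0, le_rfl, by simp⟩

lemma mem_arm1_iff (hω : 0 < Real.sin ω) (hd : d ≠ 0) :
    x ∈ arm1 q d ↔ x ∈ wedge ω q d ∧ ccw.areaForm d (x - q) = 0 := by
  constructor
  · intro hx
    refine ⟨arm1_subset_wedge hx, ?_⟩
    obtain ⟨t, -, rfl⟩ := hx
    simp
  · rintro ⟨⟨s, t, hs, -, rfl⟩, h⟩
    have ht : t = 0 := by
      simpa [add_assoc, areaForm_rot_ne_zero hω hd] using h
    exact ⟨s, hs, by simp [ht]⟩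

lemma mem_arm2_iff (hω : 0 < Real.sin ω) (hd : d ≠ 0) :
    x ∈ arm2 ω q d ↔ x ∈ wedge ω q d ∧ ccw.areaForm (x - q) (rot ω d) = 0 := by
  constructor
  · intro hx
    refine ⟨arm2_subset_wedge hx, ?_⟩
    obtain ⟨t, -, rfl⟩ := hx
    simp
  · rintro ⟨⟨s, t, -, ht, rfl⟩, h⟩
    have hs : s = 0 := by
      simpa [add_assoc, areaForm_rot_ne_zero hω hd] using h
    exact ⟨t, ht, by simp [hs]⟩

lemma arm1_inter_arm2 (hω : 0 < Real.sin ω) (hd : d ≠ 0) : arm1 q d ∩ arm2 ω q d = {q} := by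
  refine Set.Subset.antisymm (fun x hx => ?_)
    (Set.singleton_subset_iff.2 ⟨apex_mem_arm1, apex_mem_arm1⟩)
  have h₁ := ((mem_arm1_iff hω hd).1 hx.1).2
  have h₂ := ((mem_arm2_iff hω hd).1 hx.2).2
  refine sub_eq_zero.1 (eq_zero_of_areaForm_eq_zero ccw (areaForm_rot_ne_zero hω hd) h₁ ?_)
  rw [ccw.areaForm_swap, h₂, neg_zero]

lemma isExtreme_arm1 (hω : 0 < Real.sin ω) (hd : d ≠ 0) :
    IsExtreme ℝ (wedge ω q d) (arm1 q d) := by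
  have harm : arm1 q d = {x ∈ wedge ω q d | ccw.areaForm d x = ccw.areaForm d q} := by
    ext x
    simp [mem_arm1_iff hω hd, sub_eq_zero]
  rw [harm]
  refine isExtreme_sep_eq_of_forall_le _ fun x hx => ?_
  simpa using ((mem_wedge_iff hω hd).1 hx).1

lemma isExtreme_arm2 (hω : 0 < Real.sin ω) (hd : d ≠ 0) :
    IsExtreme ℝ (wedge ω q d) (arm2 ω q d) := by
  have harm : arm2 ω q d = {x ∈ wedge ω q d |
      ccw.areaForm.flip (rot ω d) x = ccw.areaForm.flip (rot ω d) q} := by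
    ext x
    simp [mem_arm2_iff hω hd, sub_eq_zero]
  rw [harm]
  refine isExtreme_sep_eq_of_forall_le _ fun x hx => ?_
  simpa using ((mem_wedge_iff hω hd).1 hx).2

lemma apex_mem_extremePoints_wedge (hω : 0 < Real.sin ω) (hd : d ≠ 0) :
    q ∈ (wedge ω q d).extremePoints ℝ := by
  rw [← isExtreme_singleton, ← arm1_inter_arm2 hω hd]
  exact (isExtreme_arm1 hω hd).inter (isExtreme_arm2 hω hd)

lemma mem_extremePoints_of_closestOn_arm1 {K : Set Plane} {y : Plane} (hd : d ≠ 0)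
    (h : ClosestOn q (arm1 q d ∩ K) y) : y ∈ (arm1 q d ∩ K).extremePoints ℝ := by
  obtain ⟨hy, hmin⟩ := h
  have hdist : ∀ x ∈ arm1 q d, inner ℝ d x = inner ℝ d q + ‖d‖ * dist q x := by
    rintro _ ⟨t, ht, rfl⟩
    rw [dist_self_add_right, norm_smul, Real.norm_of_nonneg ht, inner_add_right,
      real_inner_smul_right, real_inner_self_eq_norm_sq]
    ring
  have hsingle : {y} = {x ∈ arm1 q d ∩ K | innerₗ Plane d x = inner ℝ d y} := by
    refine Set.Subset.antisymm (Set.singleton_subset_iff.2 ⟨hy, rfl⟩) ?_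
    rintro _ ⟨⟨⟨s, -, rfl⟩, -⟩, hs⟩
    obtain ⟨⟨t, -, rfl⟩, -⟩ := hy
    have hst : s = t := by simpa [inner_add_right, real_inner_smul_right, hd] using hs
    rw [Set.mem_singleton_iff, hst]
  rw [← isExtreme_singleton, hsingle]
  refine isExtreme_sep_eq_of_forall_le _ fun x hx => ?_
  rw [innerₗ_apply_apply, hdist x hx.1, hdist y hy.1]
  gcongr
  exact hmin x hx

lemma sub_mem_span_of_mem_wedge (hx : x ∈ wedge ω q d) :
    x - q ∈ Submodule.span ℝ≥0 {d, rot ω d} := by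
  obtain ⟨s, t, hs, ht, rfl⟩ := hx
  lift s to ℝ≥0 using hs
  lift t to ℝ≥0 using ht
  exact Submodule.mem_span_pair.2 ⟨s, t, by rw [add_assoc, add_sub_cancel_left]; rfl⟩

end Wedge

namespace ConvexPolygon

variable (O : ConvexPolygon)

lemma convexIndependent_verts :
    ConvexIndependent ℝ ((↑) : ↥(O.verts : Set Plane) → Plane) :=
  convexIndependent_set_iff_notMem_convexHull_sdiff.2 O.strictConvexPos

lemma verts_subset_body : (O.verts : Set Plane) ⊆ O.body := subset_convexHull ℝ _

lemma body_nonempty : O.body.Nonempty :=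
  (Finset.card_pos.1 (by linarith [O.three_le_card])).to_set.convexHull

lemma isCompact_body : IsCompact O.body := O.verts.finite_toSet.isCompact_convexHull (𝕜 := ℝ)

lemma intAngle_le_pi (v : Plane) : O.intAngle v ≤ Real.pi := by
  refine Real.sSup_le ?_ Real.pi_pos.le
  rintro _ ⟨u, w, -, -, -, rfl⟩
  exact EuclideanGeometry.angle_le_pi u v w

lemma intAngle_le_of_body_subset_wedge {ω : ℝ} (hω₀ : 0 ≤ ω) (hωπ : ω ≤ Real.pi) {v d : Plane}
    (hd : d ≠ 0) (h : O.body ⊆ wedge ω v d) : O.intAngle v ≤ ω := by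
  refine Real.sSup_le ?_ hω₀
  rintro _ ⟨u, w, ⟨-, hu, hvu, -⟩, ⟨-, hw, hvw, -⟩, -, rfl⟩
  calc ∠ u v w ≤ InnerProductGeometry.angle d (rot ω d) :=
        angle_le_angle_of_mem_span (sub_ne_zero.2 hvu.symm) (sub_ne_zero.2 hvw.symm)
          (sub_mem_span_of_mem_wedge (h (O.verts_subset_body hu)))
          (sub_mem_span_of_mem_wedge (h (O.verts_subset_body hw)))
    _ = ω := angle_rot_self hω₀ hωπ hd

end ConvexPolygon

namespace IsOutcome

variable {ω : ℝ} {O : ConvexPolygon} {L : DirLine} {out : Outcome} (h : IsOutcome ω O L out)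
include h

lemma norm_dir : ‖out.dir‖ = 1 := h.1.1.1

lemma dir_ne_zero : out.dir ≠ 0 := norm_ne_zero_iff.1 (by simp [h.norm_dir])

lemma body_subset_wedge : O.body ⊆ wedge ω out.apex out.dir := h.1.1.2.1

lemma mem_verts_of_mem_extremePoints {B : Set Plane} {x : Plane}
    (hB : IsExtreme ℝ (wedge ω out.apex out.dir) B) (hx : x ∈ (B ∩ O.body).extremePoints ℝ) :
    x ∈ O.verts :=
  extremePoints_convexHull_subset
    ((isExtreme_inter_of_subset hB h.body_subset_wedge).extremePoints_subset_extremePoints hx)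

lemma p₁_mem_verts (hω : 0 < Real.sin ω) : out.p₁ ∈ O.verts :=
  h.mem_verts_of_mem_extremePoints (isExtreme_arm1 hω h.dir_ne_zero)
    (mem_extremePoints_of_closestOn_arm1 h.dir_ne_zero h.2.1)

lemma p₂_mem_verts (hω : 0 < Real.sin ω) : out.p₂ ∈ O.verts := by
  have hrot : rot ω out.dir ≠ 0 := norm_ne_zero_iff.1 (by simp [norm_rot, h.norm_dir])
  exact h.mem_verts_of_mem_extremePoints (isExtreme_arm2 hω h.dir_ne_zero)
    (mem_extremePoints_of_closestOn_arm1 hrot h.2.2)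

/- The apex is an extreme point of the wedge, so it could only lie in the polygon as a vertex, and
that vertex would be narrow. -/
lemma apex_notMem_body (hω₀ : 0 < ω) (hωπ : ω < Real.pi) (hO : ∀ v ∈ O.verts, ω < O.intAngle v) :
    out.apex ∉ O.body := by
  intro hmem
  have hext := apex_mem_extremePoints_wedge (q := out.apex)
    (Real.sin_pos_of_pos_of_lt_pi hω₀ hωπ) h.dir_ne_zero
  have hvert : out.apex ∈ O.verts := extremePoints_convexHull_subset
    (inter_extremePoints_subset_extremePoints_of_subset h.body_subset_wedge ⟨hmem, hext⟩)
  exact (hO _ hvert).not_ge (O.intAngle_le_of_body_subset_wedge hω₀.le hωπ.le h.dir_ne_zero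
    h.body_subset_wedge)

lemma exists_p₁_eq (hapex : out.apex ∉ O.body) :
    ∃ r : ℝ, 0 < r ∧ out.p₁ = out.apex + r • out.dir := by
  obtain ⟨⟨⟨r, hr, hp⟩, hbody⟩, -⟩ := h.2.1
  refine ⟨r, hr.lt_of_ne' ?_, hp⟩
  rintro rfl
  exact hapex (by simpa [hp] using hbody)

lemma exists_p₂_eq (hapex : out.apex ∉ O.body) :
    ∃ r : ℝ, 0 < r ∧ out.p₂ = out.apex + r • rot ω out.dir := by
  obtain ⟨⟨⟨r, hr, hp⟩, hbody⟩, -⟩ := h.2.2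
  refine ⟨r, hr.lt_of_ne' ?_, hp⟩
  rintro rfl
  exact hapex (by simpa [hp] using hbody)

lemma p₁_ne_p₂ (hω : 0 < Real.sin ω) (hapex : out.apex ∉ O.body) : out.p₁ ≠ out.p₂ := by
  intro heq
  have hmem : out.p₁ ∈ arm1 out.apex out.dir ∩ arm2 ω out.apex out.dir :=
    ⟨h.2.1.1.1, heq ▸ h.2.2.1.1⟩
  rw [arm1_inter_arm2 hω h.dir_ne_zero, Set.mem_singleton_iff] at hmem
  exact hapex (hmem ▸ h.2.1.1.2)

end IsOutcome

section ProbeExistence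

/-- The apex of the `ω`-wedge with first arm in direction `d` whose arms both support `K`: the
intersection of the supporting lines of `K` in the directions `d` and `-rot ω d`. -/
def probeApex (ω : ℝ) (K : Set Plane) (d : Plane) : Plane :=
  (Real.sin ω)⁻¹ • (leftSupport ccw K (-rot ω d) • d + leftSupport ccw K d • rot ω d)

variable {ω : ℝ} {K : Set Plane} {d x : Plane}

lemma areaForm_probeApex (hω : 0 < Real.sin ω) (hd : ‖d‖ = 1) :
    ccw.areaForm d (probeApex ω K d) = leftSupport ccw K d := by
  simp only [probeApex, map_smul, map_add,
    Orientation.areaForm_apply_self, areaForm_rot_self, hd, smul_eq_mul]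
  field_simp
  ring

lemma areaForm_probeApex_rot (hω : 0 < Real.sin ω) (hd : ‖d‖ = 1) :
    ccw.areaForm (probeApex ω K d) (rot ω d) = leftSupport ccw K (-rot ω d) := by
  simp only [probeApex, map_smul, map_add, LinearMap.smul_apply, LinearMap.add_apply,
    Orientation.areaForm_apply_self, areaForm_rot_self, hd, smul_eq_mul]
  field_simp
  ring

lemma subset_wedge_probeApex (hω : 0 < Real.sin ω) (hd : ‖d‖ = 1) (hK : IsCompact K) :
    K ⊆ wedge ω (probeApex ω K d) d := by
  intro x hx
  have h₁ := leftSupport_le (o := ccw) hK hx d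
  have h₂ := leftSupport_le (o := ccw) hK hx (-rot ω d)
  rw [map_neg, LinearMap.neg_apply, ← ccw.areaForm_swap] at h₂
  rw [mem_wedge_iff hω (norm_ne_zero_iff.1 (by simp [hd])), map_sub, map_sub,
    LinearMap.sub_apply, areaForm_probeApex hω hd, areaForm_probeApex_rot hω hd]
  exact ⟨sub_nonneg.2 h₁, sub_nonneg.2 h₂⟩

lemma isValidProbe_probeApex (O : ConvexPolygon) (hω : 0 < Real.sin ω) (hd : ‖d‖ = 1) :
    IsValidProbe ω O (probeApex ω O.body d) d := by
  have hd₀ : d ≠ 0 := norm_ne_zero_iff.1 (by simp [hd])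
  have hK := O.isCompact_body
  have hsub := subset_wedge_probeApex hω hd hK
  refine ⟨hd, hsub, ?_, ?_⟩
  · obtain ⟨x, hx, heq⟩ := exists_areaForm_eq_leftSupport (o := ccw) hK O.body_nonempty d
    exact ⟨x, (mem_arm1_iff hω hd₀).2 ⟨hsub hx, by
      rw [map_sub, heq, areaForm_probeApex hω hd, sub_self]⟩, hx⟩
  · obtain ⟨x, hx, heq⟩ := exists_areaForm_eq_leftSupport (o := ccw) hK O.body_nonempty (-rot ω d)
    rw [map_neg, LinearMap.neg_apply, ← ccw.areaForm_swap] at heq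
    exact ⟨x, (mem_arm2_iff hω hd₀).2 ⟨hsub hx, by
      rw [map_sub, LinearMap.sub_apply, heq, areaForm_probeApex_rot hω hd, sub_self]⟩, hx⟩

lemma continuous_rot_left (d : Plane) : Continuous fun θ => rot θ d := by
  simp only [rot_eq_rotation, Orientation.rotation_apply, Real.Angle.cos_coe, Real.Angle.sin_coe]
  fun_prop

lemma continuous_probeApex (hK : IsCompact K) : Continuous (probeApex ω K) := by
  have hrot : Continuous (rot ω) := by
    simp only [funext (rot_eq_rotation ω), LinearIsometryEquiv.continuous]
  have hsupport := continuous_leftSupport (o := ccw) hK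
  unfold probeApex
  fun_prop

/- At `θ = 0` the line through the apex in direction `u` supports `K` with `K` on its left, and at
`θ = -ω` it does so with `K` on its right; in between it sweeps over all of `K`. -/
lemma exists_areaForm_probeApex_eq (hω₀ : 0 < ω) (hωπ : ω < Real.pi) (hK : IsCompact K)
    {u : Plane} (hu : ‖u‖ = 1) (hx : x ∈ K) :
    ∃ θ ∈ Set.Icc (-ω) 0, ccw.areaForm u (probeApex ω K (rot θ u)) = ccw.areaForm u x := by
  have hω := Real.sin_pos_of_pos_of_lt_pi hω₀ hωπ
  have hcont : Continuous fun θ => ccw.areaForm u (probeApex ω K (rot θ u)) :=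
    (ccw.areaForm' u).continuous.comp
      ((continuous_probeApex hK).comp (continuous_rot_left u))
  have hright := areaForm_probeApex_rot (K := K) hω ((norm_rot (-ω) u).trans hu)
  rw [rot_rot, add_neg_cancel, rot_zero, ccw.areaForm_swap] at hright
  have hle := leftSupport_le (o := ccw) hK hx (-u)
  rw [map_neg, LinearMap.neg_apply] at hle
  refine intermediate_value_Icc' (by linarith) hcont.continuousOn ⟨?_, ?_⟩
  · rw [rot_zero, areaForm_probeApex hω hu]
    exact leftSupport_le hK hx u
  · linarith

lemma add_mem_wedge_rot (hω₀ : 0 < ω) (hωπ : ω < Real.pi) {θ : ℝ} (hθ : θ ∈ Set.Icc (-ω) 0)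
    {q u : Plane} (hu : u ≠ 0) : q + u ∈ wedge ω q (rot θ u) := by
  have hrot : rot θ u ≠ 0 := by rwa [← norm_ne_zero_iff, norm_rot, norm_ne_zero_iff]
  have hleft := areaForm_rot_rot θ 0 u
  rw [rot_zero] at hleft
  rw [mem_wedge_iff (Real.sin_pos_of_pos_of_lt_pi hω₀ hωπ) hrot, add_sub_cancel_left, hleft,
    rot_rot, areaForm_rot_self]
  obtain ⟨hθω, hθ₀⟩ := hθ
  constructor <;>
    exact mul_nonneg (Real.sin_nonneg_of_nonneg_of_le_pi (by linarith) (by linarith))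
      (sq_nonneg _)

lemma nonneg_of_add_smul_mem_wedge (hω : 0 < Real.sin ω) (hd : d ≠ 0) {q u : Plane} (hu : u ≠ 0)
    (hqu : q + u ∈ wedge ω q d) {t : ℝ} (ht : q + t • u ∈ wedge ω q d) : 0 ≤ t := by
  rw [mem_wedge_iff hω hd, add_sub_cancel_left] at hqu ht
  simp only [map_smul, LinearMap.smul_apply, smul_eq_mul] at ht
  by_contra! hneg
  refine hu (eq_zero_of_areaForm_eq_zero ccw (areaForm_rot_ne_zero hω hd) ?_ ?_)
  · exact le_antisymm (nonpos_of_mul_nonneg_right ht.1 hneg) hqu.1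
  · rw [ccw.areaForm_swap, neg_eq_zero]
    exact le_antisymm (nonpos_of_mul_nonneg_right ht.2 hneg) hqu.2

lemma exists_isValidProbeAlong {O : ConvexPolygon} {L : DirLine} (hω₀ : 0 < ω)
    (hωπ : ω < Real.pi) (hx : x ∈ O.body) (hxL : L.mem x) :
    ∃ q d, IsValidProbeAlong ω O L q d := by
  have hω := Real.sin_pos_of_pos_of_lt_pi hω₀ hωπ
  have hL₀ : L.dir ≠ 0 := norm_ne_zero_iff.1 (by simp [L.norm_dir])
  obtain ⟨θ, hθ, hq⟩ := exists_areaForm_probeApex_eq hω₀ hωπ O.isCompact_body L.norm_dir hx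
  set d := rot θ L.dir
  set q := probeApex ω O.body d
  have hd : ‖d‖ = 1 := (norm_rot θ L.dir).trans L.norm_dir
  have hvalid : IsValidProbe ω O q d := isValidProbe_probeApex O hω hd
  obtain ⟨t, ht⟩ := exists_eq_smul_of_areaForm_eq_zero ccw hL₀
    (show ccw.areaForm L.dir (x - q) = 0 by rw [map_sub, hq, sub_self])
  have hxt : q + t • L.dir = x := by rw [← ht, add_sub_cancel]
  have ht₀ : 0 ≤ t := nonneg_of_add_smul_mem_wedge hω (norm_ne_zero_iff.1 (hd ▸ one_ne_zero)) hL₀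
    (add_mem_wedge_rot hω₀ hωπ hθ hL₀) (hxt ▸ hvalid.2.1 hx)
  obtain ⟨s, hs⟩ := hxL
  refine ⟨q, d, hvalid, ⟨s - t, ?_⟩, t, ht₀, hxt ▸ hx⟩
  rw [sub_smul, ← ht, ← add_sub_assoc, ← hs, sub_sub_cancel]

end ProbeExistence

section Progress

variable {E : Type*} [NormedAddCommGroup E] [InnerProductSpace ℝ E]
  [Fact (Module.finrank ℝ E = 2)] (o : Orientation ℝ E (Fin 2))

/-- The points of `K` that are the start of a hull edge of `K`, traversed counterclockwise, whose
line has all of `R` on its left. When `K ⊆ V ⊆ R`, such an edge is confirmed: it is also an edge of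
the convex hull of `V`. -/
def confirmedStarts (K R : Set E) : Set E := {w ∈ K | ∃ v ∈ K, w ≠ v ∧ LiesLeft o R w v}

/-- A hull edge of `K` that an unknown set between `K` and `R` may cross: the region `R` has points
on its right. -/
def IsUnconfirmedEdge (K R : Set E) (w v : E) : Prop := IsHullEdge o K w v ∧ ¬ LiesLeft o R w v

/-- The progress made once `K` is known to be contained in an unknown set and `R` to contain it:
each point of that set counts once when found, and once when the edge leaving it is confirmed. -/
def progress (K R : Set E) : ℕ := K.ncard + (confirmedStarts o K R).ncard

/-- The possible results of testing the edge `(w, v)`, where `R` is the region left by the test and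
`p₁`, `p₂` are the points it finds: either `(w, v)` or `(v, w)` is confirmed, or there are found
points on both sides of the line; at least one of the points found is off the line. -/
def IsEdgeTest (R : Set E) (w v p₁ p₂ : E) : Prop :=
  (LiesLeft o R w v ∧ 0 < o.areaForm (v - w) (p₂ - w)) ∨
    (LiesLeft o R v w ∧ o.areaForm (v - w) (p₁ - w) < 0) ∨
      (o.areaForm (v - w) (p₁ - w) < 0 ∧ 0 < o.areaForm (v - w) (p₂ - w))

variable {o} {K K' R R' : Set E} {w v x p₁ p₂ : E}

lemma confirmedStarts_subset : confirmedStarts o K R ⊆ K := Set.sep_subset _ _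

lemma confirmedStarts_mono (hK : K ⊆ K') (hR : R' ⊆ R) :
    confirmedStarts o K R ⊆ confirmedStarts o K' R' := by
  rintro w ⟨hw, v, hv, hwv, hleft⟩
  exact ⟨hK hw, v, hK hv, hwv, hleft.mono hR⟩

lemma IsUnconfirmedEdge.notMem_confirmedStarts (h : IsUnconfirmedEdge o K R w v)
    (hK : ConvexIndependent ℝ ((↑) : K → E)) (hKR : K ⊆ R) : w ∉ confirmedStarts o K R := by
  rintro ⟨hw, b, hb, hwb, hleft⟩
  exact h.2 (h.1.right_unique hK ⟨hw, hb, hwb, hleft.mono hKR⟩ ▸ hleft)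

lemma IsEdgeTest.mono (h : IsEdgeTest o R w v p₁ p₂) (hR : R' ⊆ R) :
    IsEdgeTest o R' w v p₁ p₂ :=
  h.imp (.imp_left (·.mono hR)) (.imp_left (.imp_left (·.mono hR)))

lemma ne_and_ne_of_areaForm_sub_ne_zero (h : o.areaForm (v - w) (x - w) ≠ 0) : x ≠ w ∧ x ≠ v :=
  ⟨by rintro rfl; simp at h, by rintro rfl; exact h (o.areaForm_apply_self _)⟩

/- A new point raises the first summand; otherwise `w` becomes the start of a confirmed edge. -/
lemma IsEdgeTest.progress_lt (h : IsEdgeTest o R' w v p₁ p₂) (hedge : IsUnconfirmedEdge o K R w v)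
    (hK : ConvexIndependent ℝ ((↑) : K → E)) (hKR : K ⊆ R) (hfin : K'.Finite) (hKK' : K ⊆ K')
    (hR : R' ⊆ R) (hp₁ : p₁ ∈ K') : progress o K R < progress o K' R' := by
  have hCfin := hfin.subset (confirmedStarts_subset (o := o) (R := R'))
  have hC := confirmedStarts_mono (o := o) hKK' hR
  obtain ⟨hw, hv, hwv, hleft⟩ := hedge.1
  have hright (hneg : o.areaForm (v - w) (p₁ - w) < 0) : progress o K R < progress o K' R' :=
    add_lt_add_of_lt_of_le
      (Set.ncard_lt_ncard ⟨hKK', fun hsub => (hleft _ (hsub hp₁)).not_gt hneg⟩ hfin)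
      (Set.ncard_le_ncard hC hCfin)
  rcases h with ⟨hconf, -⟩ | ⟨-, hneg⟩ | ⟨hneg, -⟩
  · have hwC : w ∈ confirmedStarts o K' R' := ⟨hKK' hw, v, hKK' hv, hwv, hconf⟩
    exact add_lt_add_of_le_of_lt (Set.ncard_le_ncard hKK' hfin)
      (Set.ncard_lt_ncard ⟨hC, fun hsub => hedge.notMem_confirmedStarts hK hKR (hsub hwC)⟩ hCfin)
  · exact hright hneg
  · exact hright hneg

lemma four_le_progress_of_liesLeft (hfin : K.Finite) (hw : w ∈ K) (hv : v ∈ K) (hx : x ∈ K)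
    (hwv : w ≠ v) (hxw : x ≠ w) (hxv : x ≠ v) (h : LiesLeft o R w v) : 4 ≤ progress o K R := by
  have hthree : 2 < K.ncard :=
    (Set.two_lt_ncard_iff hfin).2 ⟨w, v, x, hw, hv, hx, hwv, hxw.symm, hxv.symm⟩
  have hone : 0 < (confirmedStarts o K R).ncard :=
    (Set.ncard_pos (hfin.subset confirmedStarts_subset)).2 ⟨w, hw, v, hv, hwv, h⟩
  exact Nat.add_le_add hthree hone

lemma IsEdgeTest.four_le_progress (h : IsEdgeTest o R w v p₁ p₂) (hfin : K.Finite) (hw : w ∈ K)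
    (hv : v ∈ K) (hwv : w ≠ v) (hp₁ : p₁ ∈ K) (hp₂ : p₂ ∈ K) : 4 ≤ progress o K R := by
  rcases h with ⟨hconf, hpos⟩ | ⟨hconf, hneg⟩ | ⟨hneg, hpos⟩
  · obtain ⟨h₂w, h₂v⟩ := ne_and_ne_of_areaForm_sub_ne_zero hpos.ne'
    exact four_le_progress_of_liesLeft hfin hw hv hp₂ hwv h₂w h₂v hconf
  · obtain ⟨h₁w, h₁v⟩ := ne_and_ne_of_areaForm_sub_ne_zero hneg.ne
    exact four_le_progress_of_liesLeft hfin hv hw hp₁ hwv.symm h₁v h₁w hconf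
  · obtain ⟨h₁w, h₁v⟩ := ne_and_ne_of_areaForm_sub_ne_zero hneg.ne
    obtain ⟨h₂w, h₂v⟩ := ne_and_ne_of_areaForm_sub_ne_zero hpos.ne'
    have h₁₂ : p₁ ≠ p₂ := by
      rintro rfl
      exact hneg.not_gt hpos
    have hsub : {p₁, p₂, w, v} ⊆ K := by simp [Set.insert_subset_iff, *]
    have hfour := Set.ncard_le_ncard hsub hfin
    rw [Set.ncard_insert_of_notMem (by simp [*]), Set.ncard_insert_of_notMem (by simp [*]),
      Set.ncard_pair hwv] at hfour
    exact hfour.trans (Nat.le_add_right _ _)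

/- Each summand of the progress is at most `V.ncard`, so both attain it. -/
lemma eq_and_not_isUnconfirmedEdge_of_two_mul_le_progress {V : Set E}
    (hV : ConvexIndependent ℝ ((↑) : V → E)) (hfin : V.Finite) (hKV : K ⊆ V) (hKR : K ⊆ R)
    (h : 2 * V.ncard ≤ progress o K R) : K = V ∧ ∀ w v, ¬ IsUnconfirmedEdge o K R w v := by
  have hKfin := hfin.subset hKV
  have hK_le := Set.ncard_le_ncard hKV hfin
  unfold progress at h
  have hC : confirmedStarts o K R = K :=
    Set.eq_of_subset_of_ncard_le confirmedStarts_subset (by lia) hKfin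
  refine ⟨Set.eq_of_subset_of_ncard_le hKV (by lia) hfin, fun w v hedge => ?_⟩
  exact hedge.notMem_confirmedStarts (hV.mono hKV) hKR (hC.symm ▸ hedge.1.1)

lemma eq_of_forall_not_isUnconfirmedEdge {V : Set E} (hV : ConvexIndependent ℝ ((↑) : V → E))
    (hfin : V.Finite) (hKV : K ⊆ V) (hVR : V ⊆ R) (hK : K.Nontrivial)
    (h : ∀ w v, ¬ IsUnconfirmedEdge o K R w v) : K = V :=
  eq_of_forall_isHullEdge_liesLeft o hV hKV (hfin.subset hKV) hK fun w v hwv =>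
    (not_not.1 fun hleft => h w v ⟨hwv, hleft⟩ : LiesLeft o R w v).mono hVR

end Progress
section DirectedLine

lemma DirLine.mem_pt (L : DirLine) : L.mem L.pt := ⟨0, by simp⟩

/-- The line through `w` and `v`, directed from `w` to `v`. -/
def lineThrough (w v : Plane) (h : w ≠ v) : DirLine where
  pt := w
  dir := ‖v - w‖⁻¹ • (v - w)
  norm_dir := norm_smul_inv_norm (sub_ne_zero.2 h.symm)

/-- The signed distance of `x` to the directed line `L`, positive to the left of `L`. -/
def DirLine.side (L : DirLine) (x : Plane) : ℝ := ccw.areaForm L.dir (x - L.pt)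

lemma areaForm_sub_eq_smul_side {w v : Plane} (h : w ≠ v) (x : Plane) :
    ccw.areaForm (v - w) (x - w) = ‖v - w‖ • (lineThrough w v h).side x := by
  have : ‖v - w‖ ≠ 0 := norm_ne_zero_iff.2 (sub_ne_zero.2 h.symm)
  simp [DirLine.side, lineThrough, this]

lemma DirLine.side_add {L : DirLine} {q : Plane} (hq : L.mem q) (y : Plane) :
    L.side (q + y) = ccw.areaForm L.dir y := by
  obtain ⟨t, rfl⟩ := hq
  simp [side, add_assoc]

/- The ray from the apex along `L` meets the polygon, so `L.dir` lies in the angle spanned by the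
two arms. -/
lemma IsOutcome.areaForm_dir {ω : ℝ} {O : ConvexPolygon} {L : DirLine} {out : Outcome}
    (h : IsOutcome ω O L out) (hω : 0 < Real.sin ω) (hapex : out.apex ∉ O.body) :
    0 ≤ ccw.areaForm out.dir L.dir ∧ 0 ≤ ccw.areaForm L.dir (rot ω out.dir) := by
  obtain ⟨t, ht, hmem⟩ := h.1.2.2
  have ht₀ : 0 < t := ht.lt_of_ne' (by rintro rfl; exact hapex (by simpa using hmem))
  have hwedge := (mem_wedge_iff hω h.dir_ne_zero).1 (h.body_subset_wedge hmem)
  simpa [ht₀] using hwedge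

lemma IsOutcome.side_trichotomy {ω : ℝ} {O : ConvexPolygon} {L : DirLine} {out : Outcome}
    (h : IsOutcome ω O L out) (hω : 0 < Real.sin ω) (hapex : out.apex ∉ O.body) :
    ((∀ x ∈ wedge ω out.apex out.dir, 0 ≤ L.side x) ∧ 0 < L.side out.p₂) ∨
      ((∀ x ∈ wedge ω out.apex out.dir, L.side x ≤ 0) ∧ L.side out.p₁ < 0) ∨
        (L.side out.p₁ < 0 ∧ 0 < L.side out.p₂) := by
  obtain ⟨r₁, hr₁, hp₁⟩ := h.exists_p₁_eq hapex
  obtain ⟨r₂, hr₂, hp₂⟩ := h.exists_p₂_eq hapex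
  obtain ⟨hd, he⟩ := h.areaForm_dir hω hapex
  have hL₀ : L.dir ≠ 0 := norm_ne_zero_iff.1 (by simp [L.norm_dir])
  have hwedge : ∀ x ∈ wedge ω out.apex out.dir, ∃ s t : ℝ, 0 ≤ s ∧ 0 ≤ t ∧
      L.side x = t * ccw.areaForm L.dir (rot ω out.dir) - s * ccw.areaForm out.dir L.dir := by
    rintro _ ⟨s, t, hs, ht, rfl⟩
    refine ⟨s, t, hs, ht, ?_⟩
    rw [add_assoc, DirLine.side_add h.1.2.1, ccw.areaForm_swap out.dir]
    simp only [map_add, map_smul, smul_eq_mul]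
    ring
  rw [hp₁, hp₂, DirLine.side_add h.1.2.1, DirLine.side_add h.1.2.1, map_smul, map_smul,
    ccw.areaForm_swap L.dir out.dir, smul_eq_mul, smul_eq_mul]
  set α := ccw.areaForm out.dir L.dir
  set β := ccw.areaForm L.dir (rot ω out.dir)
  rcases hd.eq_or_lt' with hα | hα
  · left
    have hβ : 0 < β := he.lt_of_ne' fun hβ => hL₀ <|
      eq_zero_of_areaForm_eq_zero ccw (areaForm_rot_ne_zero hω h.dir_ne_zero) hα
        (by rw [ccw.areaForm_swap, neg_eq_zero]; exact hβ)
    refine ⟨fun x hx => ?_, mul_pos hr₂ hβ⟩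
    obtain ⟨s, t, -, ht, hside⟩ := hwedge x hx
    rw [hside, hα, mul_zero, sub_zero]
    exact mul_nonneg ht he
  · right
    have hp₁_neg : r₁ * -α < 0 := mul_neg_of_pos_of_neg hr₁ (neg_neg_of_pos hα)
    rcases he.eq_or_lt' with hβ | hβ
    · refine .inl ⟨fun x hx => ?_, hp₁_neg⟩
      obtain ⟨s, t, hs, -, hside⟩ := hwedge x hx
      rw [hside, hβ, mul_zero, zero_sub, neg_nonpos]
      exact mul_nonneg hs hd
    · exact .inr ⟨hp₁_neg, mul_pos hr₂ hβ⟩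

lemma IsOutcome.isEdgeTest {ω : ℝ} {O : ConvexPolygon} {w v : Plane} {hwv : w ≠ v}
    {out : Outcome} (h : IsOutcome ω O (lineThrough w v hwv) out) (hω : 0 < Real.sin ω)
    (hapex : out.apex ∉ O.body) :
    IsEdgeTest ccw (wedge ω out.apex out.dir) w v out.p₁ out.p₂ := by
  have hpos : 0 < ‖v - w‖ := norm_pos_iff.2 (sub_ne_zero.2 hwv.symm)
  have hswap : ∀ x, ccw.areaForm (w - v) (x - v) = -ccw.areaForm (v - w) (x - w) := fun x => by
    rw [areaForm_sub_sub_rotate ccw v w x, ccw.areaForm_swap]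
  simpa only [IsEdgeTest, LiesLeft, hswap, areaForm_sub_eq_smul_side hwv, neg_nonneg, ← not_lt,
    neg_lt_zero, smul_pos_iff_of_pos_left hpos, smul_neg_iff_of_pos_left hpos] using
    h.side_trichotomy hω hapex

end DirectedLine

section Strategy

/-- The contact points revealed by the answers `l`. -/
def knownVertices (l : List Answer) : Set Plane :=
  {x | ∃ out, some out ∈ l ∧ (x = out.p₁ ∨ x = out.p₂)}

/-- The intersection of the wedges revealed by the answers `l`. -/
def knownRegion (ω : ℝ) (l : List Answer) : Set Plane :=
  {x | ∀ out, some out ∈ l → x ∈ wedge ω out.apex out.dir}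

lemma knownVertices_nil : knownVertices [] = ∅ := by
  simp [knownVertices]

lemma knownVertices_append_some (l : List Answer) (out : Outcome) :
    knownVertices (l ++ [some out]) = knownVertices l ∪ {out.p₁, out.p₂} := by
  ext x
  simp [knownVertices, or_and_right, exists_or, or_comm, or_assoc]

lemma knownRegion_append_some (ω : ℝ) (l : List Answer) (out : Outcome) :
    knownRegion ω (l ++ [some out]) = knownRegion ω l ∩ wedge ω out.apex out.dir := by
  ext x
  simp [knownRegion, or_imp, forall_and]

open Classical in
/-- Test an unconfirmed edge of the known vertices as long as there is one, then output the polygon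
that they span. Before anything is known, the query is a line through `p`. -/
def edgeTestStrategy (ω : ℝ) (p : Plane) : Strategy := fun l =>
  if h : ∃ w v, IsUnconfirmedEdge ccw (knownVertices l) (knownRegion ω l) w v then
    .inl (lineThrough h.choose h.choose_spec.choose h.choose_spec.choose_spec.1.2.2.1)
  else if h : ∃ P : ConvexPolygon, (P.verts : Set Plane) = knownVertices l then
    .inr h.choose
  else .inl ⟨p, EuclideanSpace.single 0 1, by simp⟩

variable {ω : ℝ} {p : Plane} {O P : ConvexPolygon} {L : DirLine} {l : List Answer}

lemma edgeTestStrategy_eq_inl (h : edgeTestStrategy ω p l = .inl L) :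
    (∃ w v, ∃ hwv : w ≠ v, L = lineThrough w v hwv ∧
      IsUnconfirmedEdge ccw (knownVertices l) (knownRegion ω l) w v) ∨
    (L.pt = p ∧ (∀ w v, ¬ IsUnconfirmedEdge ccw (knownVertices l) (knownRegion ω l) w v) ∧
      ∀ P : ConvexPolygon, (P.verts : Set Plane) ≠ knownVertices l) := by
  unfold edgeTestStrategy at h
  split_ifs at h with hedge hpoly
  · cases h
    exact .inl ⟨_, _, _, rfl, hedge.choose_spec.choose_spec⟩
  · cases h
    push Not at hedge hpoly
    exact .inr ⟨rfl, hedge, hpoly⟩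

lemma edgeTestStrategy_eq_inr (h : edgeTestStrategy ω p l = .inr P) :
    (P.verts : Set Plane) = knownVertices l ∧
      ∀ w v, ¬ IsUnconfirmedEdge ccw (knownVertices l) (knownRegion ω l) w v := by
  unfold edgeTestStrategy at h
  split_ifs at h with hedge hpoly
  cases h
  push Not at hedge
  exact ⟨hpoly.choose_spec, hedge⟩

/-- What the answers `l` of a play of `edgeTestStrategy` against `O` satisfy. The second query
brings the progress to 4, and every later one raises it. -/
structure PlayInvariant (ω : ℝ) (O : ConvexPolygon) (l : List Answer) : Prop where
  exists_isOutcome : ∀ out, some out ∈ l → ∃ L, IsOutcome ω O L out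
  nontrivial_knownVertices : l ≠ [] → (knownVertices l).Nontrivial
  length_add_two_le : 2 ≤ l.length →
    l.length + 2 ≤ progress ccw (knownVertices l) (knownRegion ω l)

namespace PlayInvariant

lemma knownVertices_subset (h : PlayInvariant ω O l) (hω : 0 < Real.sin ω) :
    knownVertices l ⊆ O.verts := by
  rintro x ⟨out, hout, hx⟩
  obtain ⟨L, hL⟩ := h.exists_isOutcome out hout
  rcases hx with rfl | rfl
  · exact hL.p₁_mem_verts hω
  · exact hL.p₂_mem_verts hω

lemma verts_subset_knownRegion (h : PlayInvariant ω O l) :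
    (O.verts : Set Plane) ⊆ knownRegion ω l := fun x hx out hout => by
  obtain ⟨L, hL⟩ := h.exists_isOutcome out hout
  exact hL.body_subset_wedge (O.verts_subset_body hx)

lemma verts_eq_knownVertices (h : PlayInvariant ω O l) (hω : 0 < Real.sin ω) (hl : l ≠ [])
    (hedge : ∀ w v, ¬ IsUnconfirmedEdge ccw (knownVertices l) (knownRegion ω l) w v) :
    (O.verts : Set Plane) = knownVertices l :=
  (eq_of_forall_not_isUnconfirmedEdge O.convexIndependent_verts O.verts.finite_toSet
    (h.knownVertices_subset hω) h.verts_subset_knownRegion (h.nontrivial_knownVertices hl)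
    hedge).symm

lemma exists_edgeTestStrategy_eq_inr (h : PlayInvariant ω O l) (hω : 0 < Real.sin ω)
    (hlen : l.length = 2 * O.verts.card - 2) : ∃ P, edgeTestStrategy ω p l = .inr P := by
  have hcard := O.three_le_card
  have hprogress := h.length_add_two_le (by lia)
  have hsub := h.knownVertices_subset hω
  obtain ⟨heq, hedge⟩ := eq_and_not_isUnconfirmedEdge_of_two_mul_le_progress (o := ccw)
    O.convexIndependent_verts O.verts.finite_toSet hsub (hsub.trans h.verts_subset_knownRegion)
    (by rw [Set.ncard_coe_finset]; lia)
  cases hS : edgeTestStrategy ω p l with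
  | inr P => exact ⟨P, rfl⟩
  | inl L =>
    rcases edgeTestStrategy_eq_inl hS with ⟨w, v, -, -, hwv⟩ | ⟨-, -, hne⟩
    · exact absurd hwv (hedge w v)
    · exact absurd heq.symm (hne O)

lemma verts_eq_of_edgeTestStrategy_eq_inr (h : PlayInvariant ω O l) (hω : 0 < Real.sin ω)
    (hS : edgeTestStrategy ω p l = .inr P) : P.verts = O.verts := by
  obtain ⟨hP, hedge⟩ := edgeTestStrategy_eq_inr hS
  have hl : l ≠ [] := by
    rintro rfl
    rw [knownVertices_nil, Finset.coe_eq_empty] at hP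
    simpa [hP] using P.three_le_card
  exact Finset.coe_injective (hP.trans (h.verts_eq_knownVertices hω hl hedge).symm)

lemma pt_mem_body (h : PlayInvariant ω O l) (hω : 0 < Real.sin ω) (hp : p ∈ O.body)
    (hL : edgeTestStrategy ω p l = .inl L) : L.pt ∈ O.body := by
  rcases edgeTestStrategy_eq_inl hL with ⟨w, v, hwv, rfl, hedge⟩ | ⟨hpt, -⟩
  · exact O.verts_subset_body (h.knownVertices_subset hω hedge.1.1)
  · rwa [hpt]

lemma le_progress_append_some (h : PlayInvariant ω O l) (hω : 0 < Real.sin ω) {out : Outcome}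
    {w v : Plane} {hwv : w ≠ v} (hout : IsOutcome ω O (lineThrough w v hwv) out)
    (hapex : out.apex ∉ O.body)
    (hedge : IsUnconfirmedEdge ccw (knownVertices l) (knownRegion ω l) w v) :
    l.length + 3 ≤ progress ccw (knownVertices (l ++ [some out]))
      (knownRegion ω (l ++ [some out])) := by
  rw [knownVertices_append_some, knownRegion_append_some]
  have hK := h.knownVertices_subset hω
  have hfin : (knownVertices l ∪ {out.p₁, out.p₂}).Finite :=
    (O.verts.finite_toSet.subset hK).union (Set.toFinite _)
  have htest := (hout.isEdgeTest hω hapex).mono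
    (Set.inter_subset_right (s := knownRegion ω l))
  have hp₁ : out.p₁ ∈ knownVertices l ∪ {out.p₁, out.p₂} := .inr (.inl rfl)
  have hp₂ : out.p₂ ∈ knownVertices l ∪ {out.p₁, out.p₂} := .inr (.inr rfl)
  have hlen : 1 ≤ l.length := List.length_pos_iff.2 fun hl => by
    simpa [hl, knownVertices_nil] using hedge.1.1
  rcases hlen.eq_or_lt with hone | htwo
  · rw [← hone]
    exact htest.four_le_progress hfin (.inl hedge.1.1) (.inl hedge.1.2.1) hwv hp₁ hp₂
  · exact (Nat.succ_le_succ (h.length_add_two_le htwo)).trans <|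
      htest.progress_lt hedge (O.convexIndependent_verts.mono hK)
        (hK.trans h.verts_subset_knownRegion) hfin Set.subset_union_left Set.inter_subset_left hp₁

lemma append_some (h : PlayInvariant ω O l) (hω : 0 < Real.sin ω) {out : Outcome}
    (hapex : out.apex ∉ O.body) (hL : edgeTestStrategy ω p l = .inl L)
    (hout : IsOutcome ω O L out) : PlayInvariant ω O (l ++ [some out]) where
  exists_isOutcome out' hout' := by
    rcases List.mem_append.1 hout' with hmem | hmem
    · exact h.exists_isOutcome out' hmem
    · obtain rfl : out' = out := by simpa using hmem
      exact ⟨L, hout⟩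
  nontrivial_knownVertices _ := by
    rw [knownVertices_append_some]
    exact ⟨out.p₁, by simp, out.p₂, by simp, hout.p₁_ne_p₂ hω hapex⟩
  length_add_two_le hlen := by
    rw [List.length_append, List.length_singleton] at hlen ⊢
    rcases edgeTestStrategy_eq_inl hL with ⟨w, v, hwv, rfl, hedge⟩ | ⟨-, hedge, hne⟩
    · exact h.le_progress_append_some hω hout hapex hedge
    · have hl : l ≠ [] := List.length_pos_iff.1 (by lia)
      exact absurd (h.verts_eq_knownVertices hω hl hedge) (hne O)

lemma append_singleton (h : PlayInvariant ω O l) (hω₀ : 0 < ω) (hωπ : ω < Real.pi)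
    (hp : p ∈ O.body) (hO : ∀ v ∈ O.verts, ω < O.intAngle v) {a : Answer}
    (hL : edgeTestStrategy ω p l = .inl L) (ha : ValidAnswer ω O L a) :
    PlayInvariant ω O (l ++ [a]) := by
  have hω := Real.sin_pos_of_pos_of_lt_pi hω₀ hωπ
  cases a with
  | none =>
    exact absurd (exists_isValidProbeAlong hω₀ hωπ (h.pt_mem_body hω hp hL) L.mem_pt) ha
  | some out => exact h.append_some hω (ha.apex_notMem_body hω₀ hωπ hO) hL ha

end PlayInvariant

lemma Consistent.of_append_singleton {S : Strategy} {a : Answer}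
    (h : Consistent ω S O (l ++ [a])) :
    Consistent ω S O l ∧ ∃ L, S l = .inl L ∧ ValidAnswer ω O L a := by
  refine ⟨fun i hi => ?_, by simpa using h l.length (by simp)⟩
  obtain ⟨L, hL, hvalid⟩ := h i (by simp; lia)
  rw [List.take_append_of_le_length hi.le] at hL
  exact ⟨L, hL, by simpa [List.getElem_append_left hi] using hvalid⟩

lemma Consistent.playInvariant (hω₀ : 0 < ω) (hωπ : ω < Real.pi) (hp : p ∈ O.body)
    (hO : ∀ v ∈ O.verts, ω < O.intAngle v) (h : Consistent ω (edgeTestStrategy ω p) O l) :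
    PlayInvariant ω O l := by
  induction l using List.reverseRecOn with
  | nil => exact ⟨by simp, by simp, by simp⟩
  | append_singleton l a ih =>
    obtain ⟨hl, L, hL, ha⟩ := h.of_append_singleton
    exact (ih hl).append_singleton hω₀ hωπ hp hO hL ha

theorem reconstruct_no_narrow_general (ω : ℝ) (hω₀ : 0 < ω) (p : Plane) :
    ∃ S : Strategy, ∀ O : ConvexPolygon, p ∈ O.body → (∀ v ∈ O.verts, ω < O.intAngle v) →
      Reconstructs ω S O (2 * O.verts.card - 2) := by
  refine ⟨edgeTestStrategy ω p, fun O hp hO => ?_⟩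
  have hωπ : ω < Real.pi := by
    obtain ⟨v, hv⟩ : O.verts.Nonempty :=
      Finset.card_pos.1 (Nat.zero_lt_of_lt O.three_le_card)
    exact (hO v hv).trans_le (O.intAngle_le_pi v)
  have hω := Real.sin_pos_of_pos_of_lt_pi hω₀ hωπ
  have hinv : ∀ l, Consistent ω (edgeTestStrategy ω p) O l → PlayInvariant ω O l :=
    fun l hl => hl.playInvariant hω₀ hωπ hp hO
  exact ⟨fun l hl P hP => (hinv l hl).verts_eq_of_edgeTestStrategy_eq_inr hω hP,
    fun l hl hlen => (hinv l hl).exists_edgeTestStrategy_eq_inr hω hlen⟩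

end Strategy

/-- there is a strategy reconstructing every convex polygon without narrow
vertices, contained in `Ψ` and containing `p`, using at most `2n - 2` probes. -/
theorem reconstruct_no_narrow (ω : ℝ) (hω₀ : 0 < ω) (hω : ω ≤ Real.pi / 2)
    (c : Plane) (r : ℝ) (hr : 0 < r) (p : Plane) :
    ∃ S : Strategy, ∀ O : ConvexPolygon,
      p ∈ O.body → O.body ⊆ Metric.closedBall c r →
      (∀ v ∈ O.verts, ω < O.intAngle v) →
      Reconstructs ω S O (2 * O.verts.card - 2) := by
  obtain ⟨S, hS⟩ := reconstruct_no_narrow_general ω hω₀ p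
  exact ⟨S, fun O hp _ hO => hS O hp hO⟩

end
end
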